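/- Let f be an orientation-preserving homeomorphism of ℝ² satisfying (P1) and (P2), with Fix(f) not compact, and let I be an adapted isotopy. Let (z'_n) be a sequence of points of Fix(f) with ‖z'_n‖ ≥ R for all n ≥ n₀. Then for every finite Borel measure ν on ℝ² invariant under f and every free disc U for f, one has ∫_{∪_{k≥0} f^k(U)} sup_{n ≥ n₀} |ρ_{z'_n}(z)| dν(z) ≤ ∫_U α̂_{U,R}(z) dν(z), where α̂_{U,R}(z) := sup { |α_{U,z'}(z)| : z' ∈ Fix(f), ‖z'‖ ≥ R }. -/

import Mathlib

open MeasureTheory Filter Topology Set Metric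

noncomputable section

attribute [local instance] Classical.propDecidable

/-- An isotopy (within homeomorphisms of `X`) from the identity to `f`,
parametrised by `t ∈ [0,1]` (the values for `t ∉ [0,1]` are irrelevant). -/
structure HIsotopy {X : Type*} [TopologicalSpace X] (f : X ≃ₜ X) where
  F : ℝ → X ≃ₜ X
  cont : Continuous fun p : ℝ × X => F p.1 p.2
  cont_symm : Continuous fun p : ℝ × X => (F p.1).symm p.2
  zero : F 0 = Homeomorph.refl X
  one : F 1 = f

/-- The set of fixed points of a map. -/
def FixPts {X : Type*} (g : X → X) : Set X := {z | g z = z}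

/-- The set of positively recurrent points of `f`. -/
def RecPlus (f : ℂ ≃ₜ ℂ) : Set ℂ :=
  {z | ∃ n : ℕ → ℕ, StrictMono n ∧ Tendsto (fun k => (⇑f)^[n k] z) atTop (𝓝 z)}

/-- The total angular variation (number of turns around the origin, i.e. the
integral of the polar-angle form `dθ`) of a continuous path `[0,1] → ℂ ∖ {0}`,
defined via a continuous lift of the argument (junk value otherwise). -/
def angVar (γ : ℝ → ℂ) : ℝ :=
  if h : ∃ θ : ℝ → ℝ, ContinuousOn θ (Set.Icc 0 1) ∧
      ∀ t ∈ Set.Icc (0 : ℝ) 1, γ t = (‖γ t‖ : ℂ) * Complex.exp ((θ t : ℂ) * Complex.I)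
  then (h.choose 1 - h.choose 0) / (2 * Real.pi)
  else 0

/-- `Enlace_I(z,z')`: the integral of `dθ` along `t ↦ f_t(z) - f_t(z')`. -/
def Enlace {f : ℂ ≃ₜ ℂ} (I : HIsotopy f) (z z' : ℂ) : ℝ :=
  angVar fun t => I.F t z - I.F t z'

/-- `Tourne_I(z)`: the integral of `dθ` along `t ↦ f_t(z)`. -/
def Tourne {f : ℂ ≃ₜ ℂ} (I : HIsotopy f) (z : ℂ) : ℝ :=
  angVar fun t => I.F t z

/-- Property (P1): `Enlace_I` is bounded on pairs of distinct fixed points. -/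
def P1 {f : ℂ ≃ₜ ℂ} (I : HIsotopy f) : Prop :=
  ∃ M : ℝ, ∀ z ∈ FixPts ⇑f, ∀ z' ∈ FixPts ⇑f, z ≠ z' → |Enlace I z z'| ≤ M

/-- Property (P2): `Tourne_I` is constant on the fixed points in a
neighbourhood of infinity (i.e. outside some compact set). -/
def P2 {f : ℂ ≃ₜ ℂ} (I : HIsotopy f) : Prop :=
  ∃ K : Set ℂ, IsCompact K ∧
    ∀ z ∈ FixPts ⇑f \ K, ∀ z' ∈ FixPts ⇑f \ K, Tourne I z = Tourne I z'

/-- An isotopy is adapted if `Tourne_I` vanishes on the fixed points in a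
neighbourhood of infinity. -/
def Adapted {f : ℂ ≃ₜ ℂ} (I : HIsotopy f) : Prop :=
  ∃ K : Set ℂ, IsCompact K ∧ ∀ z ∈ FixPts ⇑f \ K, Tourne I z = 0

/-- The orbit of `z` has rotation number `ρ` around `z'` (with respect to the
isotopy `I`): along every strictly increasing sequence of integers `(n k)` with
`f^[n k] z → z`, the Birkhoff averages of `Enlace I · z'` converge to `ρ`. -/
def HasRot {f : ℂ ≃ₜ ℂ} (I : HIsotopy f) (z' z : ℂ) (ρ : ℝ) : Prop :=
  ∀ n : ℕ → ℕ, StrictMono n → Tendsto (fun k => (⇑f)^[n k] z) atTop (𝓝 z) →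
    Tendsto (fun k => (∑ r ∈ Finset.range (n k), Enlace I ((⇑f)^[r] z) z') / (n k : ℝ))
      atTop (𝓝 ρ)

/-- The rotation number `ρ_{z'}(z)` as a function (junk value `0` if it is
not defined). -/
def rho {f : ℂ ≃ₜ ℂ} (I : HIsotopy f) (z' z : ℂ) : ℝ :=
  if h : ∃ ρ : ℝ, HasRot I z' z ρ then h.choose else 0

/-- A free disc for `f`: an open set homeomorphic to the plane and disjoint
from its image. -/
def FreeDisc (f : ℂ ≃ₜ ℂ) (U : Set ℂ) : Prop :=
  IsOpen U ∧ Nonempty (U ≃ₜ ℂ) ∧ Disjoint (⇑f '' U) U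

/-- The first return time `τ_U(z)` to `U` (junk value `0` if the orbit never
returns). -/
def retTime (f : ℂ ≃ₜ ℂ) (U : Set ℂ) (z : ℂ) : ℕ :=
  sInf {n : ℕ | 0 < n ∧ (⇑f)^[n] z ∈ U}

/-- `γ` is a path in `U` from `x` to `y` (parametrised by `[0,1]`). -/
def IsPathIn (U : Set ℂ) (x y : ℂ) (γ : ℝ → ℂ) : Prop :=
  ContinuousOn γ (Set.Icc 0 1) ∧ (∀ t ∈ Set.Icc (0 : ℝ) 1, γ t ∈ U) ∧ γ 0 = x ∧ γ 1 = y

/-- `α_{U,z'}(z) = Σ_{0 ≤ ℓ < τ_U(z)} Enlace_I(f^ℓ(z),z') + ∫_{γ_{U,z} - z'} dθ`,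
where `γ_{U,z}` is a path in `U` joining the first return `F_U(z)` to `z`. -/
def alphaU {f : ℂ ≃ₜ ℂ} (I : HIsotopy f) (U : Set ℂ) (z' z : ℂ) : ℝ :=
  (∑ ℓ ∈ Finset.range (retTime f U z), Enlace I ((⇑f)^[ℓ] z) z') +
    if h : ∃ γ : ℝ → ℂ, IsPathIn U ((⇑f)^[retTime f U z] z) z γ
    then angVar fun t => h.choose t - z' else 0

/-- `α̂_{U,R}(z) = sup { |α_{U,z'}(z)| : z' ∈ Fix(f), ‖z'‖ ≥ R }`. -/
def alphaHat {f : ℂ ≃ₜ ℂ} (I : HIsotopy f) (U : Set ℂ) (R : ℝ) (z : ℂ) : ℝ :=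
  sSup {a : ℝ | ∃ z' ∈ FixPts ⇑f, R ≤ ‖z'‖ ∧ a = |alphaU I U z' z|}

/-- The (closed) support of a measure. -/
def measSupport {X : Type*} [TopologicalSpace X] {m : MeasurableSpace X}
    (μ : Measure X) : Set X :=
  {x | ∀ U : Set X, IsOpen U → x ∈ U → μ U ≠ 0}

/-- The standard unit sphere `S² ⊂ ℝ³`. -/
notation "𝕊²" => Metric.sphere (0 : EuclideanSpace ℝ (Fin 3)) 1

instance : Fact (Module.finrank ℝ (EuclideanSpace ℝ (Fin 3)) = 3) :=
  ⟨finrank_euclideanSpace_fin⟩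

open Manifold in
/-- `g` is a `C¹` diffeomorphism of the standard sphere. -/
def IsC1SphereDiffeo (g : 𝕊² → 𝕊²) : Prop :=
  Function.Bijective g ∧ ContMDiff (𝓡 2) (𝓡 2) 1 g ∧
    ∃ g' : 𝕊² → 𝕊², Function.LeftInverse g' g ∧ Function.RightInverse g' g ∧
      ContMDiff (𝓡 2) (𝓡 2) 1 g'

/-- `f` extends to a `C¹` diffeomorphism of `S² = ℝ² ⊔ {∞}` for some smooth
structure on `S²`: transporting the extension of `f` to the one-point
compactification through some homeomorphism with the standard sphere yields a
`C¹` diffeomorphism. -/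
def ExtendsToC1SphereDiffeo (f : ℂ ≃ₜ ℂ) : Prop :=
  ∃ φ : OnePoint ℂ ≃ₜ 𝕊², IsC1SphereDiffeo fun x => φ (OnePoint.map (⇑f) (φ.symm x))

/-- The commutator loop `t ↦ [f₁^t, f₂^t] = f₁^t ∘ f₂^t ∘ (f₁^t)⁻¹ ∘ (f₂^t)⁻¹`. -/
def commLoop {X : Type*} [TopologicalSpace X] {f₁ f₂ : X ≃ₜ X}
    (I₁ : HIsotopy f₁) (I₂ : HIsotopy f₂) (t : ℝ) : X ≃ₜ X :=
  (I₂.F t).symm.trans ((I₁.F t).symm.trans ((I₂.F t).trans (I₁.F t)))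

/-- The invariant `W(f₁,f₂)` vanishes: for isotopies from the identity to
`f₁`, `f₂`, the commutator loop is null-homotopic (rel basepoint) in the group
of homeomorphisms. -/
def WVanishes {X : Type*} [TopologicalSpace X] (f₁ f₂ : X ≃ₜ X) : Prop :=
  ∃ (I₁ : HIsotopy f₁) (I₂ : HIsotopy f₂) (H : ℝ → ℝ → X ≃ₜ X),
    Continuous (fun p : (ℝ × ℝ) × X => H p.1.1 p.1.2 p.2) ∧
    Continuous (fun p : (ℝ × ℝ) × X => (H p.1.1 p.1.2).symm p.2) ∧
    (∀ t, H 0 t = commLoop I₁ I₂ t) ∧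
    (∀ t, H 1 t = Homeomorph.refl X) ∧
    (∀ s, H s 0 = Homeomorph.refl X) ∧
    (∀ s, H s 1 = Homeomorph.refl X)

/-- The shorter great-circle arc joining `p` to `z` on the unit sphere
(for `z` neither `p` nor its antipode): the points of the sphere which are
nonnegative linear combinations of `p` and `z`. -/
def minorArcS (p z : 𝕊²) : Set 𝕊² :=
  {x | ∃ a b : ℝ, 0 ≤ a ∧ 0 ≤ b ∧
    (x : EuclideanSpace ℝ (Fin 3)) =
      a • (p : EuclideanSpace ℝ (Fin 3)) + b • (z : EuclideanSpace ℝ (Fin 3))}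

/-- The longer great-circle arc joining `p` to `z` on the unit sphere. -/
def majorArcS (p z : 𝕊²) : Set 𝕊² :=
  {x | ∃ a b : ℝ, (a ≤ 0 ∨ b ≤ 0) ∧
    (x : EuclideanSpace ℝ (Fin 3)) =
      a • (p : EuclideanSpace ℝ (Fin 3)) + b • (z : EuclideanSpace ℝ (Fin 3))}


/-! ### Part A : continuous logarithms -/

theorem bw_exists_log {E : Type*} [NormedAddCommGroup E] [NormedSpace ℝ E] {X : Set E}
    (hX : Convex ℝ X) (hne : X.Nonempty) {Q : E → ℂ} (hQ : ContinuousOn Q X)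
    (h0 : ∀ x ∈ X, Q x ≠ 0) :
    ∃ L : E → ℂ, ContinuousOn L X ∧ ∀ x ∈ X, Complex.exp (L x) = Q x := by
  obtain ⟨x0, hx0⟩ := hne
  have hmem : ∀ (t : unitInterval) (x : X), x0 + (t : ℝ) • ((x : E) - x0) ∈ X := by
    intro t x
    have := hX hx0 x.2 (a := 1 - (t : ℝ)) (b := (t : ℝ)) (by have := t.2.2; linarith) t.2.1 (by ring)
    convert this using 1
    rw [smul_sub, sub_smul, one_smul]; abel
  let H : C(unitInterval × X, {z : ℂ // z ≠ 0}) :=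
    { toFun := fun p => ⟨Q (x0 + (p.1 : ℝ) • ((p.2 : E) - x0)), h0 _ (hmem p.1 p.2)⟩
      continuous_toFun := by
        refine Continuous.subtype_mk ?_ _
        refine hQ.comp_continuous ?_ (fun p => hmem p.1 p.2)
        fun_prop }
  let f : C(X, ℂ) := ContinuousMap.const _ (Complex.log (Q x0))
  have H0 : ∀ a, H (0, a) = (⟨_, (f a).exp_ne_zero⟩ : {z : ℂ // z ≠ 0}) := by
    intro a
    apply Subtype.ext
    simp [H, f, Complex.exp_log (h0 x0 hx0)]
  let G := Complex.isCoveringMap_exp.liftHomotopy H f H0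
  have hG := Complex.isCoveringMap_exp.liftHomotopy_lifts H f H0
  refine ⟨fun x => if h : x ∈ X then G (1, ⟨x, h⟩) else 0, ?_, ?_⟩
  · rw [continuousOn_iff_continuous_domRestrict]
    have : X.domRestrict (fun x => if h : x ∈ X then G (1, ⟨x, h⟩) else 0)
        = fun x : X => G (1, x) := by
      funext x; simp [Set.domRestrict]
    rw [this]
    exact G.continuous.comp (by fun_prop)
  · intro x hx
    have := congrArg Subtype.val (congrFun hG (1, ⟨x, hx⟩))
    simp only [Function.comp] at this
    simp only [hx, dif_pos]
    refine this.trans ?_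
    simp [H]

theorem bw_int_const {E : Type*} [TopologicalSpace E] {X : Set E} (hX : IsPreconnected X)
    {u : E → ℝ} (hu : ContinuousOn u X) (hint : ∀ x ∈ X, ∃ k : ℤ, u x = k) {x y : E}
    (hx : x ∈ X) (hy : y ∈ X) : u x = u y := by
  have key : ∀ x ∈ X, ∀ y ∈ X, ¬ u x < u y := by
    intro x hx y hy hlt
    obtain ⟨k, hk⟩ := hint x hx
    obtain ⟨l, hl⟩ := hint y hy
    have hkl : k + 1 ≤ l := by
      have : (k : ℝ) < l := by rw [← hk, ← hl]; exact hlt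
      exact_mod_cast this
    have hkl' : (k : ℝ) + 1 ≤ l := by exact_mod_cast hkl
    have := (hX.intermediate_value hx hy hu) (show (k : ℝ) + 1/2 ∈ Icc (u x) (u y) by
      constructor <;> linarith)
    obtain ⟨z, hz, hz'⟩ := this
    obtain ⟨m, hm⟩ := hint z hz
    have h1 : (k : ℝ) < m := by linarith
    have h2 : (m : ℝ) < k + 1 := by linarith
    have h3 : k < m := by exact_mod_cast h1
    have h4 : m < k + 1 := by exact_mod_cast h2
    omega
  exact le_antisymm (not_lt.mp (key y hy x hx)) (not_lt.mp (key x hx y hy))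

theorem bw_exp_eq {a b : ℂ} (h : Complex.exp a = Complex.exp b) :
    ∃ k : ℤ, a = b + k * (2 * Real.pi * Complex.I) := Complex.exp_eq_exp_iff_exists_int.mp h

/-- Two continuous logarithms of the same function differ by a constant. -/
theorem bw_log_unique {E : Type*} [TopologicalSpace E] {X : Set E} (hX : IsPreconnected X)
    {L M : E → ℂ} (hL : ContinuousOn L X) (hM : ContinuousOn M X)
    (h : ∀ x ∈ X, Complex.exp (L x) = Complex.exp (M x)) {x y : E}
    (hx : x ∈ X) (hy : y ∈ X) : L x - M x = L y - M y := by
  have hpi : (Real.pi : ℝ) ≠ 0 := Real.pi_ne_zero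
  have key : ∀ x ∈ X, ∃ k : ℤ, ((L x - M x).im / (2 * Real.pi)) = k ∧
      L x - M x = k * (2 * Real.pi * Complex.I) := by
    intro x hx
    obtain ⟨k, hk⟩ := bw_exp_eq (h x hx)
    refine ⟨k, ?_, by rw [hk]; ring⟩
    rw [hk]
    simp
  have hc := bw_int_const hX (u := fun x => ((L x - M x).im / (2 * Real.pi)))
    (ContinuousOn.div_const (Complex.continuous_im.comp_continuousOn (hL.sub hM)) _)
    (fun x hx => let ⟨k, hk, _⟩ := key x hx; ⟨k, hk⟩) hx hy
  obtain ⟨k, hk, hk'⟩ := key x hx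
  obtain ⟨l, hl, hl'⟩ := key y hy
  simp only [hk, hl] at hc
  have : k = l := by exact_mod_cast hc
  rw [hk', hl', this]

theorem bw_angVar_eq {γ : ℝ → ℂ} {L : ℝ → ℂ} (hL : ContinuousOn L (Icc 0 1))
    (h : ∀ t ∈ Icc (0 : ℝ) 1, Complex.exp (L t) = γ t) :
    angVar γ = ((L 1).im - (L 0).im) / (2 * Real.pi) := by
  have hex : ∃ θ : ℝ → ℝ, ContinuousOn θ (Set.Icc 0 1) ∧
      ∀ t ∈ Set.Icc (0 : ℝ) 1, γ t = (‖γ t‖ : ℂ) * Complex.exp ((θ t : ℂ) * Complex.I) := by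
    refine ⟨fun t => (L t).im, Complex.continuous_im.comp_continuousOn hL, ?_⟩
    intro t ht
    rw [← h t ht, Complex.norm_exp, Complex.ofReal_exp, ← Complex.exp_add, Complex.re_add_im]
  unfold angVar
  rw [dif_pos hex]
  obtain ⟨hc, hθ⟩ := hex.choose_spec
  set θ := hex.choose with hdef
  have hun := bw_log_unique (X := Icc (0 : ℝ) 1) isPreconnected_Icc hL
    (M := fun t => ((L t).re : ℂ) + (θ t : ℂ) * Complex.I) (by
      refine ContinuousOn.add ?_ (ContinuousOn.mul ?_ continuousOn_const)
      · exact Complex.continuous_ofReal.comp_continuousOn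
          (Complex.continuous_re.comp_continuousOn hL)
      · exact Complex.continuous_ofReal.comp_continuousOn hc) (by
      intro t ht
      rw [Complex.exp_add, ← Complex.ofReal_exp, ← Complex.norm_exp, h t ht]
      exact hθ t ht) (x := 0) (y := 1) (by simp) (by simp)
  have := congrArg Complex.im hun
  simp at this
  congr 1
  linarith

/-! ### Part B : Brouwer's lemma -/

/-- "Nice" maps: continuous open self-maps of the plane joined to the identity by a continuous
family of injective maps. -/
structure BwNice (g : ℂ → ℂ) : Prop where
  cont : Continuous g
  isOpen : IsOpenMap g
  iso : ∃ H : ℝ → ℂ → ℂ, Continuous (fun p : ℝ × ℂ => H p.1 p.2) ∧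
    (∀ t ∈ Icc (0 : ℝ) 1, Function.Injective (H t)) ∧ (∀ z, H 0 z = z) ∧ (∀ z, H 1 z = g z)

theorem BwNice.inj {g : ℂ → ℂ} (h : BwNice g) : Function.Injective g := by
  obtain ⟨H, _, h2, _, h4⟩ := h.iso
  have : g = H 1 := funext fun z => (h4 z).symm
  rw [this]; exact h2 1 (by simp)

theorem bw_curve {g : ℂ → ℂ} (hg : BwNice g) (hfix : ∀ z, g z ≠ z) (Γ : ℝ → ℂ) (s t : ℝ)
    (hΓ : ContinuousOn Γ (Icc s (t + 1))) (hshift : ∀ a ∈ Icc s t, Γ (a + 1) = g (Γ a))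
    (hst : s + 1 < t) (hclose : Γ s = Γ t)
    (hinj : ∀ a b, s ≤ a → a < b → b ≤ t → Γ a = Γ b → a = s ∧ b = t)
    (hcase : 2 ≤ t - s ∨ ∀ a ∈ Icc (t - 1) (s + 1), ∀ b ∈ Icc t (s + 2), Γ a ≠ Γ b) : False := by
  obtain ⟨H, hH, Hinj, H0, H1⟩ := hg.iso
  -- the configuration domain
  let X : Set (ℝ × ℝ) := {p | s ≤ p.1 ∧ p.1 < p.2 ∧ p.2 ≤ t ∧ p.2 - p.1 < t - s}
  have hXconv : Convex ℝ X := by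
    rintro ⟨a, b⟩ ⟨h1, h2, h3, h4⟩ ⟨a', b'⟩ ⟨h1', h2', h3', h4'⟩ u v hu hv huv
    simp only at h1 h2 h3 h4 h1' h2' h3' h4'
    have hu' : u = 1 - v := by linarith
    have strict : ∀ x y : ℝ, 0 < x → 0 < y → 0 < u * x + v * y := by
      intro x y hx hy
      rcases eq_or_lt_of_le hu with h | h
      · have : v = 1 := by linarith
        rw [← h, this]; linarith
      · have := mul_pos h hx
        have := mul_nonneg hv hy.le
        linarith
    have e1 := mul_nonneg hu (sub_nonneg.2 h1)
    have e1' := mul_nonneg hv (sub_nonneg.2 h1')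
    have e3 := mul_nonneg hu (sub_nonneg.2 h3)
    have e3' := mul_nonneg hv (sub_nonneg.2 h3')
    have e2 := strict _ _ (sub_pos.2 h2) (sub_pos.2 h2')
    have e4 := strict _ _ (sub_pos.2 h4) (sub_pos.2 h4')
    subst hu'
    refine ⟨?_, ?_, ?_, ?_⟩ <;> simp only [Prod.smul_mk, Prod.mk_add_mk, smul_eq_mul] <;> nlinarith
  have hYconv : Convex ℝ (Icc (0 : ℝ) 1 ×ˢ X) := (convex_Icc 0 1).prod hXconv
  have hΓX1 : ContinuousOn (fun q : ℝ × (ℝ × ℝ) => Γ q.2.1) (Icc (0 : ℝ) 1 ×ˢ X) := by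
    refine hΓ.comp (by fun_prop) ?_
    rintro ⟨τ, a, b⟩ ⟨_, h1, h2, h3, h4⟩
    simp only at h1 h2 h3 h4 ⊢
    constructor <;> linarith
  have hΓX2 : ContinuousOn (fun q : ℝ × (ℝ × ℝ) => Γ q.2.2) (Icc (0 : ℝ) 1 ×ˢ X) := by
    refine hΓ.comp (by fun_prop) ?_
    rintro ⟨τ, a, b⟩ ⟨_, h1, h2, h3, h4⟩
    simp only at h1 h2 h3 h4 ⊢
    constructor <;> linarith
  have hne : ∀ q ∈ X, Γ q.2 ≠ Γ q.1 := by
    rintro ⟨a, b⟩ ⟨h1, h2, h3, h4⟩ he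
    simp only at h1 h2 h3 h4 he
    obtain ⟨h, h'⟩ := hinj a b h1 h2 h3 he.symm
    subst h; subst h'; exact lt_irrefl _ h4
  obtain ⟨Λ, hΛc, hΛ⟩ := bw_exists_log hYconv ⟨(0, (s, s + 1)), by
      refine ⟨by simp, ?_⟩
      refine ⟨le_refl _, ?_, ?_, ?_⟩ <;> simp only <;> linarith⟩
    (Q := fun q : ℝ × (ℝ × ℝ) => H q.1 (Γ q.2.2) - H q.1 (Γ q.2.1))
    ((hH.comp_continuousOn (continuousOn_fst.prodMk hΓX2)).sub
      (hH.comp_continuousOn (continuousOn_fst.prodMk hΓX1))) (by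
      rintro ⟨τ, q⟩ ⟨h1, h2⟩ he
      exact hne q h2 (Hinj τ h1 (sub_eq_zero.1 he)))
  have i0 : (0 : ℝ) ∈ Icc (0 : ℝ) 1 := by simp
  have i1 : (1 : ℝ) ∈ Icc (0 : ℝ) 1 := by simp
  have memX : ∀ a b, s ≤ a → a < b → b ≤ t → b - a < t - s → (a, b) ∈ X :=
    fun a b h1 h2 h3 h4 => ⟨h1, h2, h3, h4⟩
  have e0 : ∀ a b, (a, b) ∈ X → Complex.exp (Λ (0, (a, b))) = Γ b - Γ a := by
    intro a b h
    have := hΛ (0, (a, b)) ⟨i0, h⟩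
    simpa only [H0] using this
  have e1 : ∀ a b, (a, b) ∈ X → Complex.exp (Λ (1, (a, b))) = Γ (b + 1) - Γ (a + 1) := by
    intro a b h
    have := hΛ (1, (a, b)) ⟨i1, h⟩
    obtain ⟨h1, h2, h3, h4⟩ := h
    simp only at h1 h2 h3 h4
    rw [hshift b ⟨by linarith, h3⟩, hshift a ⟨h1, by linarith⟩]
    simpa only [H1] using this
  -- continuity of pullbacks
  have pull : ∀ {Y : Set (ℝ × ℝ)} (τ : ℝ) (u v : ℝ × ℝ → ℝ), τ ∈ Icc (0 : ℝ) 1 → Continuous u →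
      Continuous v → (∀ y ∈ Y, (u y, v y) ∈ X) →
      ContinuousOn (fun y => Λ (τ, (u y, v y))) Y := by
    intro Y τ u v hτ hu hv hY
    refine hΛc.comp (by fun_prop) ?_
    intro y hy
    exact ⟨hτ, hY y hy⟩
  have pull1 : ∀ {Y : Set ℝ} (τ : ℝ) (u v : ℝ → ℝ), τ ∈ Icc (0 : ℝ) 1 → Continuous u →
      Continuous v → (∀ y ∈ Y, (u y, v y) ∈ X) →
      ContinuousOn (fun y => Λ (τ, (u y, v y))) Y := by
    intro Y τ u v hτ hu hv hY
    refine hΛc.comp (by fun_prop) ?_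
    intro y hy
    exact ⟨hτ, hY y hy⟩
  -- the constant κ
  have memL : ∀ b ∈ Ioo s t, (b, t) ∈ X := fun b hb =>
    memX _ _ hb.1.le hb.2 le_rfl (by linarith [hb.1])
  have memR : ∀ b ∈ Ioo s t, (s, b) ∈ X := fun b hb =>
    memX _ _ le_rfl hb.1 hb.2.le (by linarith [hb.2])
  have hκ := bw_log_unique (X := Icc (0 : ℝ) 1 ×ˢ Ioo s t)
    (isPreconnected_Icc.prod isPreconnected_Ioo)
    (L := fun q => Λ (q.1, (q.2, t))) (M := fun q => Λ (q.1, (s, q.2)) + Real.pi * Complex.I)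
    (hΛc.comp (by fun_prop) (fun q hq => ⟨hq.1, memL _ hq.2⟩))
    ((hΛc.comp (by fun_prop) (fun q hq => ⟨hq.1, memR _ hq.2⟩)).add continuousOn_const)
    (by
      rintro ⟨τ, b⟩ ⟨hτ, hb⟩
      rw [Complex.exp_add, Complex.exp_pi_mul_I, hΛ _ ⟨hτ, memL b hb⟩, hΛ _ ⟨hτ, memR b hb⟩]
      simp only [hclose]; ring)
    (x := (0, s + 1)) (y := (1, t - 1))
    ⟨i0, by simp only; constructor <;> linarith⟩ ⟨i1, by simp only; constructor <;> linarith⟩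
  simp only at hκ
  have hκ0 : Λ (0, (s + 1, t)) - Λ (0, (s, s + 1)) ≠ 0 := by
    intro h
    have h1 := e0 (s + 1) t (memL _ ⟨by linarith, hst⟩)
    have h2 := e0 s (s + 1) (memR _ ⟨by linarith, hst⟩)
    rw [sub_eq_zero.1 h, h2, hclose] at h1
    have : Γ (s + 1) = Γ t := by linear_combination h1 / 2
    have := (hinj (s + 1) t (by linarith) hst le_rfl this).1
    linarith
  -- logarithm of `g z - z`
  obtain ⟨Θ, hΘc, hΘ⟩ := bw_exists_log (convex_univ (𝕜 := ℝ) (E := ℂ)) ⟨0, trivial⟩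
    (Q := fun z => g z - z) ((hg.cont.sub continuous_id).continuousOn)
    (fun z _ => sub_ne_zero.2 (hfix z))
  have hθc : ContinuousOn (fun a => Θ (Γ a)) (Icc s t) :=
    hΘc.comp (hΓ.mono (Icc_subset_Icc le_rfl (by linarith))) (fun _ _ => trivial)
  have hθ : ∀ a ∈ Icc s t, Complex.exp (Θ (Γ a)) = Γ (a + 1) - Γ a := by
    intro a ha
    rw [hΘ _ trivial, hshift a ha]
  have hθst : Θ (Γ s) = Θ (Γ t) := by rw [hclose]
  have memI1 : ∀ a ∈ Icc s (t - 1), (a, a + 1) ∈ X := fun a ha =>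
    memX _ _ ha.1 (by linarith) (by linarith [ha.2]) (by linarith)
  have I1 := bw_log_unique (X := Icc s (t - 1)) isPreconnected_Icc
    (L := fun a => Θ (Γ a)) (M := fun a => Λ (0, (a, a + 1)))
    (hθc.mono (Icc_subset_Icc le_rfl (by linarith)))
    (pull1 0 id (fun a => a + 1) i0 continuous_id (by fun_prop) memI1)
    (by
      intro a ha
      rw [hθ a ⟨ha.1, by linarith [ha.2]⟩, e0 _ _ (memI1 a ha)])
    (x := s) (y := t - 1) ⟨le_rfl, by linarith⟩ ⟨by linarith, le_rfl⟩
  simp only [sub_add_cancel] at I1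
  by_cases hA : 2 ≤ t - s
  · have memI2 : ∀ a ∈ Icc (t - 1) t, (a - 1, a) ∈ X := fun a ha =>
      memX _ _ (by linarith [ha.1]) (by linarith) ha.2 (by linarith)
    have I2 := bw_log_unique (X := Icc (t - 1) t) isPreconnected_Icc
      (L := fun a => Θ (Γ a)) (M := fun a => Λ (1, (a - 1, a)))
      (hθc.mono (Icc_subset_Icc (by linarith) le_rfl))
      (pull1 1 (fun a => a - 1) id i1 (by fun_prop) continuous_id memI2)
      (by
        intro a ha
        rw [hθ a ⟨by linarith [ha.1], ha.2⟩, e1 _ _ (memI2 a ha), sub_add_cancel])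
      (x := t - 1) (y := t) ⟨le_rfl, by linarith⟩ ⟨by linarith, le_rfl⟩
    let Z : Set (ℝ × ℝ) := {p | s + 1 ≤ p.1 ∧ p.1 < p.2 ∧ p.2 ≤ t}
    have hZconv : Convex ℝ Z := by
      rintro ⟨a, b⟩ ⟨h1, h2, h3⟩ ⟨a', b'⟩ ⟨h1', h2', h3'⟩ u v hu hv huv
      simp only at h1 h2 h3 h1' h2' h3'
      have hu' : u = 1 - v := by linarith
      have strict : ∀ x y : ℝ, 0 < x → 0 < y → 0 < u * x + v * y := by
        intro x y hx hy
        rcases eq_or_lt_of_le hu with h | h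
        · have : v = 1 := by linarith
          rw [← h, this]; linarith
        · have := mul_pos h hx
          have := mul_nonneg hv hy.le
          linarith
      have e1 := mul_nonneg hu (sub_nonneg.2 h1)
      have e1' := mul_nonneg hv (sub_nonneg.2 h1')
      have e3 := mul_nonneg hu (sub_nonneg.2 h3)
      have e3' := mul_nonneg hv (sub_nonneg.2 h3')
      have e2 := strict _ _ (sub_pos.2 h2) (sub_pos.2 h2')
      subst hu'
      refine ⟨?_, ?_, ?_⟩ <;> simp only [Prod.smul_mk, Prod.mk_add_mk, smul_eq_mul] <;> nlinarith
    have memZ0 : ∀ q ∈ Z, (q.1, q.2) ∈ X := fun q hq =>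
      memX _ _ (by linarith [hq.1]) hq.2.1 hq.2.2 (by linarith [hq.1, hq.2.2])
    have memZ1 : ∀ q ∈ Z, (q.1 - 1, q.2 - 1) ∈ X := fun q hq =>
      memX _ _ (by linarith [hq.1]) (by linarith [hq.2.1]) (by linarith [hq.2.2])
        (by linarith [hq.1, hq.2.2])
    have I3 := bw_log_unique (X := Z) hZconv.isPreconnected
      (L := fun q => Λ (1, (q.1 - 1, q.2 - 1))) (M := fun q => Λ (0, (q.1, q.2)))
      (pull 1 (fun q => q.1 - 1) (fun q => q.2 - 1) i1 (by fun_prop) (by fun_prop) memZ1)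
      (pull 0 (fun q => q.1) (fun q => q.2) i0 (by fun_prop) (by fun_prop) memZ0)
      (by
        intro q hq
        rw [e1 _ _ (memZ1 q hq), e0 _ _ (memZ0 q hq), sub_add_cancel, sub_add_cancel])
      (x := (t - 1, t)) (y := (s + 1, t))
      ⟨by simp only; linarith, by simp only; linarith, le_rfl⟩
      ⟨by simp only; linarith, by simp only; linarith, le_rfl⟩
    simp only [add_sub_cancel_right] at I3
    apply hκ0
    linear_combination (1 / 2 : ℂ) * (hκ + I1 + I2 + I3 - hθst)
  · have hB := hcase.resolve_left hA
    rw [not_le] at hA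
    have memI2 : ∀ a ∈ Icc (s + 1) t, (a - 1, a) ∈ X := fun a ha =>
      memX _ _ (by linarith [ha.1]) (by linarith) ha.2 (by linarith)
    have I2 := bw_log_unique (X := Icc (s + 1) t) isPreconnected_Icc
      (L := fun a => Θ (Γ a)) (M := fun a => Λ (1, (a - 1, a)))
      (hθc.mono (Icc_subset_Icc (by linarith) le_rfl))
      (pull1 1 (fun a => a - 1) id i1 (by fun_prop) continuous_id memI2)
      (by
        intro a ha
        rw [hθ a ⟨by linarith [ha.1], ha.2⟩, e1 _ _ (memI2 a ha), sub_add_cancel])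
      (x := s + 1) (y := t) ⟨le_rfl, hst.le⟩ ⟨hst.le, le_rfl⟩
    obtain ⟨N, hNc, hN⟩ := bw_exists_log
      (X := Icc (t - 1) (s + 1) ×ˢ Icc t (s + 2)) ((convex_Icc _ _).prod (convex_Icc _ _))
      ⟨(t - 1, t), ⟨le_rfl, by simp only; linarith⟩, ⟨le_rfl, by simp only; linarith⟩⟩
      (Q := fun q : ℝ × ℝ => Γ q.2 - Γ q.1)
      (ContinuousOn.sub
        (hΓ.comp (by fun_prop) (by
          rintro ⟨a, b⟩ ⟨⟨h1, h2⟩, ⟨h3, h4⟩⟩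
          simp only at h1 h2 h3 h4 ⊢
          constructor <;> linarith))
        (hΓ.comp (by fun_prop) (by
          rintro ⟨a, b⟩ ⟨⟨h1, h2⟩, ⟨h3, h4⟩⟩
          simp only at h1 h2 h3 h4 ⊢
          constructor <;> linarith)))
      (by
        rintro ⟨a, b⟩ ⟨h1, h2⟩ he
        exact hB a h1 b h2 (sub_eq_zero.1 he).symm)
    have J1 := bw_log_unique (X := Icc (t - 1) (s + 1)) isPreconnected_Icc
      (L := fun a => Θ (Γ a)) (M := fun a => N (a, a + 1))
      (hθc.mono (Icc_subset_Icc (by linarith) (by linarith)))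
      (hNc.comp (by fun_prop) (fun a ha => ⟨ha, by
        constructor <;> simp only <;> linarith [ha.1, ha.2]⟩))
      (by
        intro a ha
        rw [hθ a ⟨by linarith [ha.1], by linarith [ha.2]⟩, hN _ ⟨ha, by
          constructor <;> simp only <;> linarith [ha.1, ha.2]⟩])
      (x := t - 1) (y := s + 1) ⟨le_rfl, by linarith⟩ ⟨by linarith, le_rfl⟩
    have memJ2 : ∀ b ∈ Icc t (s + 2), (s, b - 1) ∈ X := fun b hb =>
      memX _ _ le_rfl (by linarith [hb.1]) (by linarith [hb.2]) (by linarith [hb.2])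
    have J2 := bw_log_unique (X := Icc t (s + 2)) isPreconnected_Icc
      (L := fun b => N (s + 1, b)) (M := fun b => Λ (1, (s, b - 1)))
      (hNc.comp (by fun_prop) (fun b hb => ⟨⟨by simp only; linarith, le_rfl⟩, hb⟩))
      (pull1 1 (fun _ => s) (fun b => b - 1) i1 continuous_const (by fun_prop) memJ2)
      (by
        intro b hb
        rw [hN _ ⟨⟨by simp only; linarith, le_rfl⟩, hb⟩, e1 _ _ (memJ2 b hb), sub_add_cancel])
      (x := t) (y := s + 2) ⟨le_rfl, by linarith⟩ ⟨by linarith, le_rfl⟩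
    have memJ3 : ∀ a ∈ Icc (t - 1) (s + 1), (a, t) ∈ X := fun a ha =>
      memX _ _ (by linarith [ha.1]) (by linarith [ha.2]) le_rfl (by linarith [ha.1])
    have J3 := bw_log_unique (X := Icc (t - 1) (s + 1)) isPreconnected_Icc
      (L := fun a => N (a, t)) (M := fun a => Λ (0, (a, t)))
      (hNc.comp (by fun_prop) (fun a ha => ⟨ha, ⟨le_rfl, by simp only; linarith⟩⟩))
      (pull1 0 id (fun _ => t) i0 continuous_id continuous_const memJ3)
      (by
        intro a ha
        rw [hN _ ⟨ha, ⟨le_rfl, by simp only; linarith⟩⟩, e0 _ _ (memJ3 a ha)])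
      (x := t - 1) (y := s + 1) ⟨le_rfl, by linarith⟩ ⟨by linarith, le_rfl⟩
    have r1 : s + 1 + 1 = s + 2 := by ring
    have r2 : s + 2 - 1 = s + 1 := by ring
    simp only [r1, r2, sub_add_cancel, add_sub_cancel_right] at I2 J1 J2 J3
    apply hκ0
    linear_combination (1 / 2 : ℂ) * (hκ + I1 + I2 + J1 + J2 + J3 - hθst)

theorem bw_orbit_curve {g : ℂ → ℂ} (hg : BwNice g) (hfix : ∀ z, g z ≠ z) (Γ0 : ℝ → ℂ)
    (hc : ContinuousOn Γ0 (Icc 0 1)) (h01 : Γ0 1 = g (Γ0 0))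
    (hinj : ∀ a ∈ Icc (0 : ℝ) 1, ∀ b ∈ Icc (0 : ℝ) 1, Γ0 a = Γ0 b → a = b)
    (hint : ∀ a ∈ Icc (0 : ℝ) 1, ∀ b ∈ Icc (0 : ℝ) 1, Γ0 a = g (Γ0 b) →
      (a = 1 ∧ b = 0) ∨ (a = 0 ∧ b = 1))
    (c : ℝ) (hc01 : c ∈ Icc (0 : ℝ) 1) (n : ℕ) (hn : 2 ≤ n) (hper : g^[n] (Γ0 c) = Γ0 c) : False := by
  let Γ : ℝ → ℂ := fun a => g^[⌊a⌋₊] (Γ0 (Int.fract a))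
  have hΓk : ∀ (k : ℕ) (u : ℝ), u ∈ Icc (0 : ℝ) 1 → Γ (k + u) = g^[k] (Γ0 u) := by
    intro k u hu
    rcases eq_or_lt_of_le hu.2 with h | h
    · have e : (k : ℝ) + u = ((k + 1 : ℕ) : ℝ) := by rw [h]; push_cast; ring
      simp only [Γ]
      rw [e, Nat.floor_natCast, Int.fract_natCast, h, h01, Function.iterate_succ_apply]
    · have e1 : ⌊(k : ℝ) + u⌋₊ = k := by
        rw [Nat.floor_eq_iff (by have := hu.1; positivity)]
        constructor <;> linarith [hu.1]
      have e2 : Int.fract ((k : ℝ) + u) = u := by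
        rw [Int.fract_natCast_add, Int.fract_eq_self.2 ⟨hu.1, h⟩]
      simp only [Γ]
      rw [e1, e2]
  have hΓ0 : ∀ u ∈ Icc (0 : ℝ) 1, Γ u = Γ0 u := by
    intro u hu
    have := hΓk 0 u hu
    simpa using this
  have hΓadd : ∀ (k : ℕ) (a : ℝ), 0 ≤ a → Γ (k + a) = g^[k] (Γ a) := by
    intro k a ha
    have h1 : a = (⌊a⌋₊ : ℝ) + (a - ⌊a⌋₊) := by ring
    have h2 : a - ⌊a⌋₊ ∈ Icc (0 : ℝ) 1 := by
      constructor
      · linarith [Nat.floor_le ha]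
      · linarith [Nat.lt_floor_add_one a]
    have h3 : (k : ℝ) + a = ((k + ⌊a⌋₊ : ℕ) : ℝ) + (a - ⌊a⌋₊) := by push_cast; ring
    rw [h3, hΓk _ _ h2, Function.iterate_add_apply]
    congr 1
    rw [← hΓk _ _ h2]; congr 1; ring
  have hΓ1 : ∀ a, 0 ≤ a → Γ (a + 1) = g (Γ a) := by
    intro a ha
    have := hΓadd 1 a ha
    rw [add_comm]; simpa using this
  have hcont : ∀ m : ℕ, ContinuousOn Γ (Icc 0 m) := by
    intro m
    induction m with
    | zero => simp
    | succ m ih =>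
      have e : Icc (0 : ℝ) ((m + 1 : ℕ) : ℝ) = Icc 0 (m : ℝ) ∪ Icc (m : ℝ) (m + 1) := by
        rw [Icc_union_Icc_eq_Icc (by positivity) (by linarith)]; push_cast; rfl
      rw [e]
      refine ContinuousOn.union_of_isClosed ih ?_ isClosed_Icc isClosed_Icc
      have : ContinuousOn (fun a : ℝ => g^[m] (Γ0 (a - m))) (Icc (m : ℝ) (m + 1)) := by
        refine (hg.cont.iterate m).comp_continuousOn (hc.comp (by fun_prop) ?_)
        rintro a ⟨h1, h2⟩
        constructor <;> simp only <;> linarith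
      refine this.congr ?_
      rintro a ⟨h1, h2⟩
      have := hΓk m (a - m) ⟨by linarith, by linarith⟩
      simpa using this
  have hcontI : ∀ x y : ℝ, 0 ≤ x → ContinuousOn Γ (Icc x y) := by
    intro x y hx
    obtain ⟨m, hm⟩ := exists_nat_ge y
    exact (hcont m).mono (Icc_subset_Icc hx hm)
  have gk : ∀ k : ℕ, Function.Injective (g^[k]) := fun k => hg.inj.iterate k
  -- two consecutive pieces
  have hint' : ∀ a ∈ Icc (0 : ℝ) 1, ∀ b ∈ Icc (1 : ℝ) 2, Γ a = Γ b →
      (a = 1 ∧ b = 1) ∨ (a = 0 ∧ b = 2) := by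
    intro a ha b hb hab
    have hb' : b - 1 ∈ Icc (0 : ℝ) 1 := ⟨by linarith [hb.1], by linarith [hb.2]⟩
    have e := hΓ1 (b - 1) hb'.1
    rw [sub_add_cancel, hΓ0 _ hb', ← hab, hΓ0 _ ha] at e
    rcases hint a ha _ hb' e with h | h
    · left; exact ⟨h.1, by linarith [h.2]⟩
    · right; exact ⟨h.1, by linarith [h.2]⟩
  have hinj' : ∀ a ∈ Icc (0 : ℝ) 1, ∀ b ∈ Icc (0 : ℝ) 1, Γ a = Γ b → a = b := by
    intro a ha b hb hab
    exact hinj a ha b hb (by rw [← hΓ0 a ha, ← hΓ0 b hb, hab])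
  have hshift : ∀ a b : ℝ, 1 ≤ a → 1 ≤ b → Γ a = Γ b → Γ (a - 1) = Γ (b - 1) := by
    intro a b ha hb hab
    have e1 := hΓ1 (a - 1) (by linarith)
    have e2 := hΓ1 (b - 1) (by linarith)
    rw [sub_add_cancel] at e1 e2
    exact hg.inj (by rw [← e1, ← e2, hab])
  by_cases h02 : Γ 0 = Γ 2
  · refine bw_curve hg hfix Γ 0 2 (hcontI _ _ le_rfl) (fun a ha => hΓ1 a ha.1) (by norm_num) h02 ?_
      (Or.inl (by norm_num))
    intro a b ha hab hb he
    rcases lt_or_ge a 1 with h1 | h1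
    · rcases le_or_gt b 1 with h2 | h2
      · have := hinj' a ⟨ha, h1.le⟩ b ⟨by linarith, h2⟩ he; linarith
      · rcases hint' a ⟨ha, h1.le⟩ b ⟨h2.le, hb⟩ he with h | h
        · linarith
        · exact h
    · have := hinj' (a - 1) ⟨by linarith, by linarith⟩ (b - 1) ⟨by linarith, by linarith⟩
        (hshift a b h1 (by linarith) he)
      linarith
  · have hkey : ∀ a b : ℝ, 0 ≤ a → a < 1 → a < b → Γ a = Γ b → 2 < b := by
      intro a b ha ha1 hab he
      by_contra hb
      push Not at hb
      rcases le_or_gt b 1 with h2 | h2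
      · have := hinj' a ⟨ha, ha1.le⟩ b ⟨by linarith, h2⟩ he; linarith
      · rcases hint' a ⟨ha, ha1.le⟩ b ⟨h2.le, hb⟩ he with h | h
        · linarith
        · apply h02; rw [← h.1, ← h.2, he]
    let S : Set ℝ := Icc (2 : ℝ) (n + c) ∩ Γ ⁻¹' (Γ '' Icc 0 1)
    have hScl : IsCompact S := by
      have h1 : IsCompact (Γ '' Icc 0 1) := isCompact_Icc.image_of_continuousOn (hcontI 0 1 le_rfl)
      have h2 : IsClosed S :=
        (hcontI 2 (n + c) (by norm_num)).preimage_isClosed_of_isClosed isClosed_Icc h1.isClosed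
      exact isCompact_Icc.of_isClosed_subset h2 inter_subset_left
    have hn2 : (2 : ℝ) ≤ n := by exact_mod_cast hn
    have hSne : S.Nonempty := by
      refine ⟨n + c, ⟨by linarith [hc01.1], le_rfl⟩, c, hc01, ?_⟩
      rw [hΓk n c hc01, hper, hΓ0 c hc01]
    obtain ⟨t, ⟨⟨ht2, htn⟩, s, hs, hst⟩, htmin⟩ := hScl.exists_isLeast hSne
    have hlt : s + 1 < t := by
      by_contra hcon
      push Not at hcon
      have h1 : s = 1 := by linarith [hs.2]
      have h2 : t = 2 := by linarith [hs.2]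
      have := hΓ1 1 (by norm_num)
      norm_num at this
      subst h1; subst h2
      exact hfix _ (by rw [← this, hst])
    refine bw_curve hg hfix Γ s t (hcontI _ _ hs.1) (fun a ha => hΓ1 a (hs.1.trans ha.1)) hlt hst ?_ ?_
    · intro a b ha hab hb he
      have ha0 : 0 ≤ a := hs.1.trans ha
      set i := ⌊a⌋₊
      have hi1 : (i : ℝ) ≤ a := Nat.floor_le ha0
      have hi2 : a < i + 1 := Nat.lt_floor_add_one a
      have e1 := hΓadd i (a - i) (by linarith)
      have e2 := hΓadd i (b - i) (by linarith)
      rw [add_sub_cancel] at e1 e2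
      have e3 : Γ (a - i) = Γ (b - i) := gk i (by rw [← e1, ← e2, he])
      have hb2 := hkey (a - i) (b - i) (by linarith) (by linarith) (by linarith) e3
      have hi0 : (0 : ℝ) ≤ i := by positivity
      have hbt : t ≤ b - i := htmin ⟨⟨hb2.le, by linarith⟩, a - i, ⟨by linarith, by linarith⟩, e3⟩
      have hi00 : (i : ℝ) = 0 := by linarith
      have hbt' : b = t := by linarith
      refine ⟨?_, hbt'⟩
      apply hinj' a ⟨ha0, by linarith⟩ s hs
      rw [he, hbt', hst]
    · by_cases h2 : 2 ≤ t - s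
      · exact Or.inl h2
      · right
        push Not at h2
        intro a ha b hb he
        have e := hshift a b (by linarith [ha.1]) (by linarith [hb.1]) he
        rcases hint' (a - 1) ⟨by linarith [ha.1], by linarith [ha.2, hs.2]⟩ (b - 1)
          ⟨by linarith [hb.1], by linarith [hb.2, hs.2]⟩ e with h | h
        · linarith [h.1, h.2, ha.2, hb.1, hs.2]
        · linarith [h.1, h.2, ha.1, hb.2, hs.2]

theorem bw_brouwer {g : ℂ → ℂ} (hg : BwNice g) (hfix : ∀ z, g z ≠ z) (x : ℂ) (n : ℕ) (hn : 1 ≤ n)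
    (hper : g^[n] x = x) : False := by
  rcases Nat.eq_or_lt_of_le hn with h1 | h1
  · subst h1; exact hfix x hper
  -- minimise the radius
  let m : ℂ → ℝ := fun u => max ‖u - x‖ ‖g u - x‖
  have hgc := hg.cont
  have hmc : Continuous m := by fun_prop
  obtain ⟨y, -, hy⟩ : ∃ y ∈ closedBall x (m x), ∀ u ∈ closedBall x (m x), m y ≤ m u :=
    (isCompact_closedBall x (m x)).exists_isMinOn ⟨x, by simp [m]⟩ hmc.continuousOn
  have hymin : ∀ u, m y ≤ m u := by
    intro u
    by_cases hu : u ∈ closedBall x (m x)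
    · exact hy u hu
    · have h1 : m y ≤ m x := hy x (by simp [m])
      rw [mem_closedBall, dist_eq_norm] at hu
      push Not at hu
      have : ‖u - x‖ ≤ m u := le_max_left _ _
      linarith
  set r := m y with hr
  have hyr : ‖y - x‖ ≤ r := le_max_left _ _
  have hgyr : ‖g y - x‖ ≤ r := le_max_right _ _
  have hr0 : 0 < r := by
    rcases (norm_nonneg (y - x)).trans hyr |>.lt_or_eq with h | h
    · exact h
    · exfalso
      rw [← h] at hyr hgyr
      have e1 := sub_eq_zero.1 (norm_le_zero_iff.1 hyr)
      have e2 := sub_eq_zero.1 (norm_le_zero_iff.1 hgyr)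
      exact hfix y (by rw [e2, e1])
  -- general boundary facts
  have hbd : ∀ u, ‖u - x‖ ≤ r → ‖g u - x‖ ≤ r → ‖u - x‖ = r ∧ ‖g u - x‖ = r := by
    intro u hu hgu
    have key1 : ¬ (‖g u - x‖ < r) := by
      intro hlt
      -- move u slightly towards x
      have hO : IsOpen {v | ‖g v - x‖ < r} := isOpen_lt (by fun_prop) continuous_const
      have hcl : u ∈ closure (ball x r) := by
        rw [closure_ball x hr0.ne', mem_closedBall, dist_eq_norm]; exact hu
      obtain ⟨v, hv1, hv2⟩ := mem_closure_iff.1 hcl _ hO hlt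
      rw [mem_ball, dist_eq_norm] at hv2
      exact absurd (hymin v) (not_le.2 (max_lt hv2 hv1))
    have key2 : ¬ (‖u - x‖ < r) := by
      intro hlt
      have hO : IsOpen (g '' (ball x r)) := hg.isOpen _ isOpen_ball
      have hcl : g u ∈ closure (ball x r) := by
        rw [closure_ball x hr0.ne', mem_closedBall, dist_eq_norm]; exact hgu
      obtain ⟨v, ⟨w, hw, hwv⟩, hv2⟩ := mem_closure_iff.1 hcl _ hO
        ⟨u, by rw [mem_ball, dist_eq_norm]; exact hlt, rfl⟩
      rw [mem_ball, dist_eq_norm] at hw hv2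
      rw [← hwv] at hv2
      exact absurd (hymin w) (not_le.2 (max_lt hw hv2))
    exact ⟨le_antisymm hu (not_lt.1 key2), le_antisymm hgu (not_lt.1 key1)⟩
  obtain ⟨hy1, hy2⟩ := hbd y hyr hgyr
  let Γ0 : ℝ → ℂ := fun a => x + (max (1 - 2 * a) 0 : ℝ) • (y - x) + (max (2 * a - 1) 0 : ℝ) • (g y - x)
  have hL : ∀ a : ℝ, a ≤ 1 / 2 → Γ0 a = x + (1 - 2 * a : ℝ) • (y - x) := by
    intro a ha
    simp only [Γ0]
    rw [max_eq_left (by linarith), max_eq_right (by linarith)]; simp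
  have hRt : ∀ a : ℝ, 1 / 2 ≤ a → Γ0 a = x + (2 * a - 1 : ℝ) • (g y - x) := by
    intro a ha
    simp only [Γ0]
    rw [max_eq_right (by linarith), max_eq_left (by linarith)]; simp
  have hnorm : ∀ a : ℝ, ‖Γ0 a - x‖ = |1 - 2 * a| * r := by
    intro a
    rcases le_total a (1 / 2) with h | h
    · rw [hL a h, add_sub_cancel_left, norm_smul, hy1, Real.norm_eq_abs]
    · rw [hRt a h, add_sub_cancel_left, norm_smul, hy2, Real.norm_eq_abs, abs_sub_comm]
  have hΓ00 : Γ0 0 = y := by rw [hL 0 (by norm_num)]; simp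
  have hΓ01 : Γ0 1 = g y := by rw [hRt 1 (by norm_num)]; norm_num
  have hΓh : Γ0 (1 / 2) = x := by rw [hL _ le_rfl]; norm_num
  have hsm : ∀ (a : ℝ) (u v : ℂ), a ≠ 0 → x + a • u = x + a • v → u = v := by
    intro a u v ha h
    exact smul_right_injective ℂ ha (add_left_cancel h)
  have hcross : ∀ a b : ℝ, a ≤ 1 / 2 → 1 / 2 ≤ b → Γ0 a = Γ0 b → a = b := by
    intro a b ha hb hab
    have h1 : |1 - 2 * a| * r = |1 - 2 * b| * r := by rw [← hnorm, ← hnorm, hab]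
    have h2 := mul_right_cancel₀ hr0.ne' h1
    rw [abs_of_nonneg (by linarith), abs_of_nonpos (by linarith)] at h2
    by_cases h0 : 1 - 2 * a = 0
    · linarith
    · rw [hL a ha, hRt b hb] at hab
      have h3 : 2 * b - 1 = 1 - 2 * a := by linarith
      rw [h3] at hab
      have := hsm _ _ _ h0 hab
      exact absurd (sub_left_injective this).symm (hfix y)
  have hinjΓ : ∀ a b : ℝ, Γ0 a = Γ0 b → a = b := by
    intro a b hab
    have h1 : |1 - 2 * a| * r = |1 - 2 * b| * r := by rw [← hnorm, ← hnorm, hab]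
    have h2 := mul_right_cancel₀ hr0.ne' h1
    rcases le_total a (1 / 2) with h | h <;> rcases le_total b (1 / 2) with h' | h'
    · rw [abs_of_nonneg (by linarith), abs_of_nonneg (by linarith)] at h2; linarith
    · exact hcross a b h h' hab
    · exact (hcross b a h' h hab.symm).symm
    · rw [abs_of_nonpos (by linarith), abs_of_nonpos (by linarith)] at h2; linarith
  have hle : ∀ a ∈ Icc (0 : ℝ) 1, ‖Γ0 a - x‖ ≤ r := by
    intro a ha
    rw [hnorm]
    have : |1 - 2 * a| ≤ 1 := abs_le.2 ⟨by linarith [ha.2], by linarith [ha.1]⟩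
    nlinarith
  have hends : ∀ a ∈ Icc (0 : ℝ) 1, ‖Γ0 a - x‖ = r → a = 0 ∨ a = 1 := by
    intro a ha h
    rw [hnorm] at h
    have h2 : |1 - 2 * a| = 1 := mul_right_cancel₀ hr0.ne' (by rw [h, one_mul])
    rcases (abs_eq zero_le_one).1 h2 with h3 | h3
    · left; linarith
    · right; linarith
  refine bw_orbit_curve hg hfix Γ0 (by fun_prop) (by rw [hΓ01, hΓ00]) (fun a _ b _ => hinjΓ a b) ?_
    (1 / 2) (by norm_num) n h1 (by rw [hΓh, hper])
  intro a ha b hb hab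
  have hb1 := hle b hb
  have ha1 := hle a ha
  rw [hab] at ha1
  obtain ⟨e1, e2⟩ := hbd _ hb1 ha1
  rw [← hab] at e2
  have e3 := hends b hb e1
  have e4 := hends a ha e2
  rcases e3 with e3 | e3 <;> rcases e4 with e4 | e4
  · exfalso
    subst e3; subst e4; exact hfix _ hab.symm
  · exact Or.inl ⟨e4, e3⟩
  · exact Or.inr ⟨e4, e3⟩
  · exfalso
    subst e3; subst e4; exact hfix _ hab.symm

/-! ### Part C : pushing points and Franks' lemma -/

theorem BwNice.comp {g h : ℂ → ℂ} (hg : BwNice g) (hh : BwNice h) : BwNice (g ∘ h) := by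
  refine ⟨hg.cont.comp hh.cont, hg.isOpen.comp hh.isOpen, ?_⟩
  obtain ⟨G, G1, G2, G3, G4⟩ := hg.iso
  obtain ⟨H, H1, H2, H3, H4⟩ := hh.iso
  refine ⟨fun t => G t ∘ H t, ?_, fun t ht => (G2 t ht).comp (H2 t ht), ?_, ?_⟩
  · exact G1.comp (continuous_fst.prodMk H1)
  · intro z; simp [G3, H3]
  · intro z; simp [G4, H4]

theorem BwNice.id : BwNice (fun z => z) := by
  refine ⟨continuous_id, IsOpenMap.id, fun _ z => z, by fun_prop, ?_, ?_, ?_⟩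
  · intro t _ a b h; exact h
  · intro z; rfl
  · intro z; rfl

theorem bw_small_push (p q : ℂ) (r : ℝ) (hr : 0 < r) (hpq : ‖q - p‖ < r) :
    ∃ φ : ℂ → ℂ, BwNice φ ∧ (∀ z, z ∉ ball p r → φ z = z) ∧ φ p = q := by
  let b : ℂ → ℝ := fun x => max (1 - ‖x - p‖ / r) 0
  have hb : ∀ x y, |b x - b y| ≤ ‖x - y‖ / r := by
    intro x y
    have h1 := abs_max_sub_max_le_abs (1 - ‖x - p‖ / r) (1 - ‖y - p‖ / r) 0
    refine h1.trans ?_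
    have h2 : 1 - ‖x - p‖ / r - (1 - ‖y - p‖ / r) = (‖y - p‖ - ‖x - p‖) / r := by ring
    rw [h2, abs_div, abs_of_pos hr]
    gcongr
    refine (abs_norm_sub_norm_le _ _).trans ?_
    rw [sub_sub_sub_cancel_right, norm_sub_rev]
  let H : ℝ → ℂ → ℂ := fun t x => x + (t * b x) • (q - p)
  have hest : ∀ t ∈ Icc (0 : ℝ) 1, ∀ x y, ‖(H t x - H t y) - (x - y)‖ ≤ ‖q - p‖ / r * ‖x - y‖ := by
    intro t ht x y
    have : (H t x - H t y) - (x - y) = (t * (b x - b y)) • (q - p) := by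
      simp only [H]; rw [mul_sub, sub_smul]; ring
    rw [this, norm_smul, Real.norm_eq_abs, abs_mul, abs_of_nonneg ht.1]
    have h1 := hb x y
    have h2 : t * |b x - b y| ≤ 1 * (‖x - y‖ / r) := by
      gcongr; exact ht.2
    calc t * |b x - b y| * ‖q - p‖ ≤ 1 * (‖x - y‖ / r) * ‖q - p‖ := by gcongr
      _ = _ := by ring
  have hk : ‖q - p‖ / r < 1 := (div_lt_one hr).2 hpq
  have hinj : ∀ t ∈ Icc (0 : ℝ) 1, Function.Injective (H t) := by
    intro t ht x y hxy
    have h1 := hest t ht x y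
    rw [hxy, sub_self, zero_sub, norm_neg] at h1
    by_contra hne
    have : 0 < ‖x - y‖ := norm_pos_iff.2 (sub_ne_zero.2 hne)
    nlinarith
  have hbc : Continuous b := by fun_prop
  have hHc : Continuous (fun p : ℝ × ℂ => H p.1 p.2) := by
    simp only [H]; fun_prop
  let c : NNReal := ⟨‖q - p‖ / r, by positivity⟩
  have happ : ApproximatesLinearOn (H 1) (ContinuousLinearEquiv.refl ℝ ℂ : ℂ →L[ℝ] ℂ) univ c := by
    intro x _ y _
    exact hest 1 (by simp) x y
  have hc1 : c < ‖((ContinuousLinearEquiv.refl ℝ ℂ).symm : ℂ →L[ℝ] ℂ)‖₊⁻¹ := by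
    have : ((ContinuousLinearEquiv.refl ℝ ℂ).symm : ℂ →L[ℝ] ℂ) = ContinuousLinearMap.id ℝ ℂ := rfl
    rw [this]
    have h2 : ‖ContinuousLinearMap.id ℝ ℂ‖₊ = 1 := by
      ext; simp
    rw [h2, inv_one]
    exact hk
  refine ⟨H 1, ⟨hHc.comp (by fun_prop : Continuous fun z : ℂ => ((1 : ℝ), z)), ?_, H, hHc, hinj, ?_, ?_⟩, ?_, ?_⟩
  · exact (happ.toHomeomorph (H 1) (Or.inr hc1)).isOpenMap
  · intro z; simp [H]
  · intro z; rfl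
  · intro z hz
    rw [mem_ball, dist_eq_norm, not_lt] at hz
    have : b z = 0 := by
      simp only [b]; rw [max_eq_right]
      have := (one_le_div hr).2 hz
      linarith
    simp [H, this]
  · simp [H, b]

theorem bw_push {V : Set ℂ} (hV : IsOpen V) (hc : IsPreconnected V) {p q : ℂ} (hp : p ∈ V)
    (hq : q ∈ V) : ∃ φ : ℂ → ℂ, BwNice φ ∧ (∀ z, z ∉ V → φ z = z) ∧ φ p = q := by
  refine hc.induction₂' (fun p q => ∃ φ : ℂ → ℂ, BwNice φ ∧ (∀ z, z ∉ V → φ z = z) ∧ φ p = q)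
    ?_ ?_ hp hq
  · intro x hx
    obtain ⟨r, hr, hrV⟩ := Metric.isOpen_iff.1 hV x hx
    apply mem_nhdsWithin_of_mem_nhds
    filter_upwards [ball_mem_nhds x (half_pos hr)] with y hy
    rw [mem_ball, dist_eq_norm] at hy
    constructor
    · obtain ⟨φ, h1, h2, h3⟩ := bw_small_push x y r hr (by linarith)
      exact ⟨φ, h1, fun z hz => h2 z (fun h => hz (hrV h)), h3⟩
    · obtain ⟨φ, h1, h2, h3⟩ := bw_small_push y x (r / 2) (half_pos hr) (by rwa [norm_sub_rev])
      refine ⟨φ, h1, fun z hz => h2 z (fun h => hz (hrV ?_)), h3⟩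
      rw [mem_ball, dist_eq_norm] at h ⊢
      have : z - x = (z - y) + (y - x) := by ring
      rw [this]
      linarith [norm_add_le (z - y) (y - x)]
  · rintro x y z - - - ⟨φ, h1, h2, h3⟩ ⟨ψ, k1, k2, k3⟩
    refine ⟨ψ ∘ φ, k1.comp h1, ?_, by simp [h3, k3]⟩
    intro w hw
    simp [h2 w hw, k2 w hw]

theorem bw_push_props {φ : ℂ → ℂ} {V : Set ℂ} (hφ : BwNice φ) (h : ∀ z, z ∉ V → φ z = z) {z : ℂ} :
    φ z ∈ V ↔ z ∈ V := by
  constructor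
  · intro h1
    by_contra h2
    rw [h z h2] at h1; exact h2 h1
  · intro h1
    by_contra h2
    have := hφ.inj (h _ h2)
    rw [this] at h2; exact h2 h1

theorem bw_iter {φ G : ℂ → ℂ} {V : Set ℂ} (h : ∀ z, z ∉ V → φ z = z) (x : ℂ) (n : ℕ)
    (hn : ∀ i, 1 ≤ i → i ≤ n → G^[i] x ∉ V) : (φ ∘ G)^[n] x = G^[n] x := by
  induction n with
  | zero => rfl
  | succ n ih =>
    rw [Function.iterate_succ_apply', ih (fun i h1 h2 => hn i h1 (by omega)), Function.comp_apply,
      h _ (by rw [← Function.iterate_succ_apply' G]; exact hn _ (by omega) le_rfl),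
      Function.iterate_succ_apply']

/-- Existence of an orbit segment from `A` to `B`. -/
def BwRel (G : ℂ → ℂ) (A B : Set ℂ) : Prop := ∃ n, 1 ≤ n ∧ ∃ x ∈ A, G^[n] x ∈ B

theorem BwRel.first {G : ℂ → ℂ} {A B : Set ℂ} (h : BwRel G A B) :
    ∃ n x, x ∈ A ∧ G^[n + 1] x ∈ B ∧ ∀ i, 1 ≤ i → i ≤ n → G^[i] x ∉ B := by
  obtain ⟨n, hn, x, hx, hxB⟩ := h
  have hex : ∃ n, 1 ≤ n ∧ G^[n] x ∈ B := ⟨n, hn, hxB⟩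
  obtain ⟨h1, h2⟩ := Nat.find_spec hex
  refine ⟨Nat.find hex - 1, x, hx, by rw [Nat.sub_add_cancel h1]; exact h2, ?_⟩
  intro i hi1 hi2 hi3
  exact Nat.find_min hex (m := i) (by omega) ⟨hi1, hi3⟩

theorem bw_franks {ι : Type*} (V : ι → Set ℂ) (hVo : ∀ j, IsOpen (V j))
    (hVc : ∀ j, IsPreconnected (V j)) (hVd : ∀ j k, j ≠ k → Disjoint (V j) (V k)) (m : ℕ) :
    1 ≤ m → ∀ G : ℂ → ℂ, BwNice G → (∀ z, G z ≠ z) → (∀ j, ∀ x ∈ V j, G x ∉ V j) →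
    ∀ c : ℕ → ι, c m = c 0 → (∀ i < m, BwRel G (V (c i)) (V (c (i + 1)))) → False := by
  induction m using Nat.strong_induction_on with
  | _ m ih =>
  intro hm G hG hfix hfree c hcm hrel
  -- properties of pushed maps
  have hpush : ∀ (j : ι) (φ : ℂ → ℂ), BwNice φ → (∀ z, z ∉ V j → φ z = z) →
      BwNice (φ ∘ G) ∧ (∀ z, (φ ∘ G) z ≠ z) ∧ (∀ k, ∀ x ∈ V k, (φ ∘ G) x ∉ V k) := by
    intro j φ hφ hφV
    refine ⟨hφ.comp hG, ?_, ?_⟩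
    · intro z hz
      by_cases h : G z ∈ V j
      · have h1 : φ (G z) ∈ V j := (bw_push_props hφ hφV).2 h
        rw [Function.comp_apply] at hz
        rw [hz] at h1
        exact hfree j z h1 h
      · rw [Function.comp_apply, hφV _ h] at hz
        exact hfix z hz
    · intro k x hx hcon
      rw [Function.comp_apply] at hcon
      by_cases h : G x ∈ V j
      · have h1 : φ (G x) ∈ V j := (bw_push_props hφ hφV).2 h
        by_cases hjk : j = k
        · subst hjk; exact hfree j x hx h
        · exact Set.disjoint_left.1 (hVd j k hjk) h1 hcon
      · rw [hφV _ h] at hcon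
        exact hfree k x hx hcon
  rcases Nat.eq_or_lt_of_le hm with h1 | h1
  · -- m = 1
    subst h1
    have h0 := hrel 0 (by norm_num)
    rw [zero_add, hcm] at h0
    obtain ⟨n, x, hx, hxn, hmin⟩ := h0.first
    obtain ⟨φ, hφ, hφV, hφx⟩ := bw_push (hVo (c 0)) (hVc (c 0)) hxn hx
    obtain ⟨p1, p2, p3⟩ := hpush (c 0) φ hφ hφV
    refine bw_brouwer p1 p2 x (n + 1) (by omega) ?_
    rw [Function.iterate_succ_apply', bw_iter hφV x n hmin, Function.comp_apply,
      ← Function.iterate_succ_apply' G, hφx]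
  · -- no orbit from `c i` to `c 1`
    have hno : ∀ i, 1 ≤ i → i < m → ¬ BwRel G (V (c i)) (V (c 1)) := by
      intro i hi1 him hR
      refine ih i him hi1 G hG hfix hfree (fun k => if k = i then c 1 else c (k + 1)) ?_ ?_
      · simp only [if_true]
        rw [if_neg (by omega)]
      · intro k hk
        rw [if_neg (by omega)]
        by_cases hki : k + 1 = i
        · rw [if_pos hki, hki]; exact hR
        · rw [if_neg hki]; exact hrel (k + 1) (by omega)
    obtain ⟨n, x, hx, hxn, hmin⟩ := (hrel 0 (by omega)).first
    obtain ⟨n1, hn1, x1, hx1, hx1n⟩ := hrel 1 h1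
    obtain ⟨φ, hφ, hφV, hφx⟩ := bw_push (hVo (c 1)) (hVc (c 1)) hxn hx1
    obtain ⟨p1, p2, p3⟩ := hpush (c 1) φ hφ hφV
    have hkeep : ∀ i, 1 ≤ i → i < m → ∀ y ∈ V (c i), ∀ k, (φ ∘ G)^[k] y = G^[k] y := by
      intro i hi1 him y hy k
      apply bw_iter hφV
      intro l hl _ hcon
      exact hno i hi1 him ⟨l, hl, y, hy, hcon⟩
    refine ih (m - 1) (by omega) (by omega) (φ ∘ G) p1 p2 p3
      (fun k => if k = 0 then c 0 else c (k + 1)) ?_ ?_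
    · simp only [if_true]
      rw [if_neg (by omega), Nat.sub_add_cancel hm, hcm]
    · intro k hk
      rw [if_neg (Nat.succ_ne_zero k)]
      by_cases hk0 : k = 0
      · subst hk0
        rw [if_pos rfl]
        refine ⟨n1 + (n + 1), by omega, x, hx, ?_⟩
        rw [Function.iterate_add_apply, Function.iterate_succ_apply' _ n, bw_iter hφV x n hmin,
          Function.comp_apply, ← Function.iterate_succ_apply' G, hφx, hkeep 1 le_rfl h1 x1 hx1]
        exact hx1n
      · rw [if_neg hk0]
        obtain ⟨l, hl, y, hy, hyl⟩ := hrel (k + 1) (by omega)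
        refine ⟨l, hl, y, hy, ?_⟩
        rw [hkeep (k + 1) (by omega) (by omega) y hy]
        exact hyl

/-! ### Part D : lifting to the universal cover of the complement of a fixed point -/

/-- The generator `2πi` of the deck group. -/
def bwT : ℂ := 2 * Real.pi * Complex.I

theorem bwT_im (k : ℝ) : ((k : ℂ) * bwT).im = k * (2 * Real.pi) := by
  simp [bwT]

theorem bwT_re (k : ℝ) : ((k : ℂ) * bwT).re = 0 := by
  simp [bwT]

theorem bwT_ne : bwT ≠ 0 := by
  simp [bwT, Real.pi_ne_zero]

theorem bw_exp_add_T (w : ℂ) (k : ℤ) : Complex.exp (w + k * bwT) = Complex.exp w := by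
  rw [Complex.exp_eq_exp_iff_exists_int]
  exact ⟨k, rfl⟩

structure BwLift {f : ℂ ≃ₜ ℂ} (I : HIsotopy f) (z' : ℂ) (F : ℝ → ℂ → ℂ) : Prop where
  cont : Continuous fun p : ℝ × ℂ => F p.1 p.2
  exp : ∀ t w, Complex.exp (F t w) = I.F t (z' + Complex.exp w) - I.F t z'
  zero : ∀ w, F 0 w = w
  per : ∀ t w (k : ℤ), F t (w + k * bwT) = F t w + k * bwT

theorem bw_exists_lift {f : ℂ ≃ₜ ℂ} (I : HIsotopy f) (z' : ℂ) : ∃ F, BwLift I z' F := by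
  have hQ : Continuous fun p : ℝ × ℂ => I.F p.1 (z' + Complex.exp p.2) - I.F p.1 z' := by
    have h1 : Continuous fun p : ℝ × ℂ => I.F p.1 (z' + Complex.exp p.2) :=
      I.cont.comp (by fun_prop : Continuous fun p : ℝ × ℂ => (p.1, z' + Complex.exp p.2))
    have h2 : Continuous fun p : ℝ × ℂ => I.F p.1 z' :=
      I.cont.comp (by fun_prop : Continuous fun p : ℝ × ℂ => (p.1, z'))
    exact h1.sub h2
  obtain ⟨L, hLc, hL⟩ := bw_exists_log (X := (univ : Set (ℝ × ℂ))) convex_univ ⟨0, trivial⟩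
    hQ.continuousOn (by
      intro p _ h
      have := (I.F p.1).injective (sub_eq_zero.1 h)
      exact Complex.exp_ne_zero p.2 (by simp at this))
  have hLc' : Continuous L := continuousOn_univ.1 hLc
  have hL0 : ∀ w, Complex.exp (L (0, w)) = Complex.exp w := by
    intro w
    rw [hL _ trivial]; simp [I.zero]
  have hconst : ∀ w, L (0, w) - w = L (0, 0) - 0 := by
    intro w
    exact bw_log_unique (X := (univ : Set ℂ)) isPreconnected_univ (L := fun w => L (0, w))
      (M := fun w => w) (by fun_prop) (by fun_prop) (fun w _ => hL0 w) trivial trivial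
  obtain ⟨k, hk⟩ := bw_exp_eq (hL0 0)
  refine ⟨fun t w => L (t, w) - L (0, 0), ?_, ?_, ?_, ?_⟩
  · fun_prop
  · intro t w
    have e : L (t, w) - L (0, 0) = L (t, w) + ((-k : ℤ) : ℂ) * bwT := by
      rw [hk, bwT]; push_cast; ring
    rw [e, bw_exp_add_T, hL _ trivial]
  · intro w
    have := hconst w
    rw [sub_zero] at this
    rw [← this]; ring
  · intro t w j
    have := bw_log_unique (X := (univ : Set (ℝ × ℂ))) isPreconnected_univ
      (L := fun p => L (p.1, p.2 + j * bwT)) (M := fun p => L p) (by fun_prop) (by fun_prop)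
      (by intro p _; rw [hL _ trivial, hL _ trivial]; simp only [bw_exp_add_T])
      (x := (t, w)) (y := (0, w)) trivial trivial
    simp only at this
    have h1 := hconst (w + j * bwT)
    have h2 := hconst w
    linear_combination this + h1 - h2

namespace BwLift

variable {f : ℂ ≃ₜ ℂ} {I : HIsotopy f} {z' : ℂ} {F : ℝ → ℂ → ℂ}

theorem cont1 (h : BwLift I z' F) (t : ℝ) : Continuous (F t) :=
  h.cont.comp (by fun_prop : Continuous fun w : ℂ => (t, w))

theorem inj (h : BwLift I z' F) (t : ℝ) : Function.Injective (F t) := by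
  intro w w' hw
  have h1 : Complex.exp (F t w) = Complex.exp (F t w') := by rw [hw]
  rw [h.exp, h.exp] at h1
  have h2 := add_left_cancel ((I.F t).injective (sub_left_injective h1))
  obtain ⟨k, hk⟩ := bw_exp_eq h2
  change w = w' + k * bwT at hk
  have h3 := h.per t w' k
  rw [← hk, hw] at h3
  rw [hk, ← sub_eq_zero]
  linear_combination -h3

theorem isOpenMap (h : BwLift I z' F) (t : ℝ) : IsOpenMap (F t) := by
  have hE : IsOpenMap fun w => Complex.exp (F t w) := by
    have : (fun w => Complex.exp (F t w)) = (fun u => u - I.F t z') ∘ (I.F t) ∘ (fun u => z' + u) ∘ Complex.exp := by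
      funext w; simp [h.exp]
    rw [this]
    exact (Homeomorph.subRight (I.F t z')).isOpenMap.comp ((I.F t).isOpenMap.comp
      ((Homeomorph.addLeft z').isOpenMap.comp Complex.isOpenMap_exp))
  intro W hW
  rw [isOpen_iff_mem_nhds]
  rintro _ ⟨w, hw, rfl⟩
  let N : Set ℂ := {v | |v.im - (F t w).im| < Real.pi}
  have hN : IsOpen N := isOpen_lt (by fun_prop) continuous_const
  have hW' : IsOpen (W ∩ F t ⁻¹' N) := hW.inter (hN.preimage (h.cont1 t))
  have hO : IsOpen (N ∩ Complex.exp ⁻¹' ((fun w => Complex.exp (F t w)) '' (W ∩ F t ⁻¹' N))) :=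
    hN.inter ((hE _ hW').preimage Complex.continuous_exp)
  have hwN : F t w ∈ N := by simp [N, Real.pi_pos]
  refine mem_of_superset (hO.mem_nhds ⟨hwN, ⟨w, ⟨hw, hwN⟩, rfl⟩⟩) ?_
  rintro v ⟨hvN, u, ⟨huW, huN⟩, huv⟩
  refine ⟨u, huW, ?_⟩
  obtain ⟨k, hk⟩ := bw_exp_eq huv
  change F t u = v + k * bwT at hk
  have him : (F t u).im = v.im + k * (2 * Real.pi) := by
    rw [hk, Complex.add_im]
    have := bwT_im k
    push_cast at this
    rw [this]
  have h1 : |v.im - (F t w).im| < Real.pi := hvN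
  have h2 : |(F t u).im - (F t w).im| < Real.pi := huN
  rw [abs_lt] at h1 h2
  have hpi := Real.pi_pos
  have hk0 : k = 0 := by
    have h3 : (k : ℝ) < 1 := by nlinarith
    have h4 : (-1 : ℝ) < k := by nlinarith
    have h5 : k < 1 := by exact_mod_cast h3
    have h6 : -1 < k := by exact_mod_cast h4
    omega
  rw [hk, hk0]; simp

theorem enlace (h : BwLift I z' F) (w : ℂ) :
    Enlace I (z' + Complex.exp w) z' = ((F 1 w).im - w.im) / (2 * Real.pi) := by
  have := bw_angVar_eq (γ := fun t => I.F t (z' + Complex.exp w) - I.F t z') (L := fun t => F t w)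
    (h.cont.comp (by fun_prop : Continuous fun t : ℝ => (t, w))).continuousOn (fun t _ => h.exp t w)
  rw [h.zero] at this
  exact this

/-- the maps `G_p` -/
theorem nice (h : BwLift I z' F) (p : ℤ) : BwNice (fun w => F 1 w - p * bwT) := by
  refine ⟨(h.cont1 1).sub continuous_const, ?_, fun t w => F t w - (t * p) * bwT, ?_, ?_, ?_, ?_⟩
  · exact (Homeomorph.subRight (p * bwT)).isOpenMap.comp (h.isOpenMap 1)
  · have := h.cont
    fun_prop
  · intro t _ a b hab
    exact h.inj t (sub_left_injective hab)
  · intro z; simp [h.zero]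
  · intro z; simp

theorem exp_one (h : BwLift I z' F) (hz' : z' ∈ FixPts ⇑f) (w : ℂ) :
    z' + Complex.exp (F 1 w) = f (z' + Complex.exp w) := by
  have hz'' : f z' = z' := hz'
  rw [h.exp, I.one, hz'']; ring

theorem exp_iter (h : BwLift I z' F) (hz' : z' ∈ FixPts ⇑f) (w : ℂ) (n : ℕ) :
    z' + Complex.exp ((F 1)^[n] w) = f^[n] (z' + Complex.exp w) := by
  induction n with
  | zero => rfl
  | succ n ih =>
    rw [Function.iterate_succ_apply', h.exp_one hz', ih, Function.iterate_succ_apply' f]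

theorem sum_enlace (h : BwLift I z' F) (hz' : z' ∈ FixPts ⇑f) (w : ℂ) (n : ℕ) :
    ∑ r ∈ Finset.range n, Enlace I (f^[r] (z' + Complex.exp w)) z'
      = (((F 1)^[n] w).im - w.im) / (2 * Real.pi) := by
  induction n with
  | zero => simp
  | succ n ih =>
    rw [Finset.sum_range_succ, ih, ← h.exp_iter hz', h.enlace, Function.iterate_succ_apply']
    ring

theorem no_fix (h : BwLift I z' F) (hz' : z' ∈ FixPts ⇑f) {M : ℝ}
    (hM : ∀ z ∈ FixPts ⇑f, ∀ z' ∈ FixPts ⇑f, z ≠ z' → |Enlace I z z'| ≤ M) (p : ℤ)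
    (hp : M < |(p : ℝ)|) (w : ℂ) : F 1 w - p * bwT ≠ w := by
  intro hw
  have hw' : F 1 w = w + p * bwT := by linear_combination hw
  have h1 := h.exp_one hz' w
  rw [hw', bw_exp_add_T] at h1
  have h2 := hM (z' + Complex.exp w) h1.symm z' hz' (by simp [Complex.exp_ne_zero])
  rw [h.enlace, hw', Complex.add_im] at h2
  have := bwT_im p
  push_cast at this
  rw [this] at h2
  have e : (w.im + p * (2 * Real.pi) - w.im) / (2 * Real.pi) = p := by
    have := Real.pi_ne_zero
    field_simp; ring
  rw [e] at h2
  linarith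

theorem per1 (h : BwLift I z' F) (n : ℕ) (w : ℂ) (k : ℤ) :
    (F 1)^[n] (w + k * bwT) = (F 1)^[n] w + k * bwT := by
  induction n with
  | zero => rfl
  | succ n ih => rw [Function.iterate_succ_apply', ih, h.per, Function.iterate_succ_apply']

theorem iter_G (h : BwLift I z' F) (p : ℤ) (n : ℕ) (w : ℂ) :
    (fun w => F 1 w - p * bwT)^[n] w = (F 1)^[n] w - (n * p : ℤ) * bwT := by
  induction n with
  | zero => simp
  | succ n ih =>
    rw [Function.iterate_succ_apply', ih, Function.iterate_succ_apply']
    have := h.per 1 ((F 1)^[n] w) (-(n * p))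
    rw [show (F 1)^[n] w - (n * p : ℤ) * bwT = (F 1)^[n] w + (-(n * p) : ℤ) * bwT by push_cast; ring, this]
    push_cast; ring

end BwLift

structure BwLog (U : Set ℂ) (z' : ℂ) (l : ℂ → ℂ) : Prop where
  cont : ContinuousOn l U
  exp : ∀ z ∈ U, Complex.exp (l z) = z - z'

theorem bw_free_not_mem {f : ℂ ≃ₜ ℂ} {U : Set ℂ} (hU : FreeDisc f U) {z' : ℂ}
    (hz' : z' ∈ FixPts ⇑f) : z' ∉ U := by
  intro h
  exact Set.disjoint_left.1 hU.2.2 ⟨z', h, hz'⟩ h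

theorem bw_free_image {f : ℂ ≃ₜ ℂ} {U : Set ℂ} (hU : FreeDisc f U) {z : ℂ} (hz : z ∈ U) :
    f z ∉ U := fun h => Set.disjoint_left.1 hU.2.2 ⟨z, hz, rfl⟩ h

theorem bw_exists_logU {U : Set ℂ} (e : U ≃ₜ ℂ) {z' : ℂ} (hz' : z' ∉ U) : ∃ l, BwLog U z' l := by
  obtain ⟨L, hLc, hL⟩ := bw_exists_log (X := (univ : Set ℂ)) convex_univ ⟨0, trivial⟩
    (Q := fun v => (e.symm v : ℂ) - z')
    ((continuous_subtype_val.comp e.symm.continuous).sub continuous_const).continuousOn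
    (by intro v _ h
        apply hz'
        rw [← sub_eq_zero.1 h]; exact (e.symm v).2)
  have hLc' : Continuous L := continuousOn_univ.1 hLc
  refine ⟨fun z => if h : z ∈ U then L (e ⟨z, h⟩) else 0, ?_, ?_⟩
  · rw [continuousOn_iff_continuous_domRestrict]
    have : U.domRestrict (fun z => if h : z ∈ U then L (e ⟨z, h⟩) else 0) = fun z : U => L (e z) := by
      funext z
      simp [Set.domRestrict_apply]
    rw [this]
    exact hLc'.comp e.continuous
  · intro z hz
    simp only [dif_pos hz]
    rw [hL _ trivial, e.symm_apply_apply]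

theorem bw_U_path {U : Set ℂ} (e : U ≃ₜ ℂ) {x y : ℂ} (hx : x ∈ U) (hy : y ∈ U) :
    ∃ γ : ℝ → ℂ, IsPathIn U x y γ := by
  refine ⟨fun t => (e.symm ((1 - t : ℝ) • e ⟨x, hx⟩ + (t : ℝ) • e ⟨y, hy⟩) : ℂ), ?_, ?_, ?_, ?_⟩
  · apply Continuous.continuousOn
    exact continuous_subtype_val.comp (e.symm.continuous.comp (by fun_prop))
  · intro t _; exact Subtype.coe_prop _
  · simp
  · simp

theorem bw_U_preconn {U : Set ℂ} (e : U ≃ₜ ℂ) : IsPreconnected U := by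
  have h : IsPreconnected (range fun v : ℂ => (e.symm v : ℂ)) :=
    isPreconnected_range (continuous_subtype_val.comp e.symm.continuous)
  have h2 : (range fun v : ℂ => (e.symm v : ℂ)) = U := by
    ext z; constructor
    · rintro ⟨v, rfl⟩; exact (e.symm v).2
    · intro hz; exact ⟨e ⟨z, hz⟩, by simp⟩
  rwa [h2] at h

theorem bw_ret_mem {f : ℂ ≃ₜ ℂ} {U : Set ℂ} {z : ℂ} (hz : z ∈ U) : f^[retTime f U z] z ∈ U := by
  by_cases h : {n : ℕ | 0 < n ∧ (⇑f)^[n] z ∈ U}.Nonempty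
  · exact (Nat.sInf_mem h).2
  · rw [Set.not_nonempty_iff_eq_empty] at h
    unfold retTime
    rw [h, Nat.sInf_empty]; exact hz

theorem bw_im_T (w v : ℂ) (k : ℤ) (h : w = v + k * bwT) : (w.im - v.im) / (2 * Real.pi) = k := by
  have := bwT_im k
  push_cast at this
  rw [h, Complex.add_im, this]
  have := Real.pi_ne_zero
  field_simp; ring

theorem bw_lift_log {f : ℂ ≃ₜ ℂ} {I : HIsotopy f} {z' : ℂ} {F : ℝ → ℂ → ℂ} (h : BwLift I z' F)
    (hz' : z' ∈ FixPts ⇑f) {U : Set ℂ} {l : ℂ → ℂ} (hl : BwLog U z' l) {z : ℂ} (hz : z ∈ U)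
    (n : ℕ) (hn : f^[n] z ∈ U) :
    ∃ j : ℤ, (F 1)^[n] (l z) = l (f^[n] z) + j * bwT := by
  have h1 := h.exp_iter hz' (l z) n
  rw [hl.exp z hz, add_sub_cancel] at h1
  have h2 : Complex.exp ((F 1)^[n] (l z)) = Complex.exp (l (f^[n] z)) := by
    rw [hl.exp _ hn, ← h1]; ring
  exact bw_exp_eq h2

theorem bw_sum_log {f : ℂ ≃ₜ ℂ} {I : HIsotopy f} {z' : ℂ} {F : ℝ → ℂ → ℂ} (h : BwLift I z' F)
    (hz' : z' ∈ FixPts ⇑f) {U : Set ℂ} {l : ℂ → ℂ} (hl : BwLog U z' l) {z : ℂ} (hz : z ∈ U)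
    (n : ℕ) : ∑ r ∈ Finset.range n, Enlace I (f^[r] z) z'
      = (((F 1)^[n] (l z)).im - (l z).im) / (2 * Real.pi) := by
  have := h.sum_enlace hz' (l z) n
  rwa [hl.exp z hz, add_sub_cancel] at this

theorem bw_alpha {f : ℂ ≃ₜ ℂ} {I : HIsotopy f} {z' : ℂ} {F : ℝ → ℂ → ℂ} (h : BwLift I z' F)
    (hz' : z' ∈ FixPts ⇑f) {U : Set ℂ} (e : U ≃ₜ ℂ) {l : ℂ → ℂ} (hl : BwLog U z' l) {z : ℂ}
    (hz : z ∈ U) :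
    ∃ j : ℤ, alphaU I U z' z = j ∧
      (F 1)^[retTime f U z] (l z) = l (f^[retTime f U z] z) + j * bwT := by
  have hr : f^[retTime f U z] z ∈ U := bw_ret_mem hz
  obtain ⟨j, hj⟩ := bw_lift_log h hz' hl hz _ hr
  refine ⟨j, ?_, hj⟩
  have hex : ∃ γ : ℝ → ℂ, IsPathIn U (f^[retTime f U z] z) z γ := bw_U_path e hr hz
  unfold alphaU
  rw [dif_pos hex, bw_sum_log h hz' hl hz]
  obtain ⟨h1, h2, h3, h4⟩ := hex.choose_spec
  have := bw_angVar_eq (γ := fun t => hex.choose t - z') (L := fun t => l (hex.choose t))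
    (hl.cont.comp h1 h2) (fun t ht => hl.exp _ (h2 t ht))
  rw [this]
  simp only [h3, h4]
  rw [← bw_im_T _ _ _ hj]
  ring

/-- The lifted discs. -/
def bwV (U : Set ℂ) (l : ℂ → ℂ) (j : ℤ) : Set ℂ := (fun z => l z + j * bwT) '' U

theorem bwV_disj {U : Set ℂ} {z' : ℂ} {l : ℂ → ℂ} (hl : BwLog U z' l) (j k : ℤ) (hjk : j ≠ k) :
    Disjoint (bwV U l j) (bwV U l k) := by
  rw [Set.disjoint_left]
  rintro _ ⟨z, hz, rfl⟩ ⟨u, hu, huz⟩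
  simp only at huz
  have h1 : Complex.exp (l u + k * bwT) = Complex.exp (l z + j * bwT) := by rw [huz]
  rw [bw_exp_add_T, bw_exp_add_T, hl.exp _ hu, hl.exp _ hz] at h1
  have h2 : u = z := sub_left_injective h1
  subst h2
  have h3 := mul_right_cancel₀ bwT_ne (add_left_cancel huz)
  exact hjk (by exact_mod_cast h3.symm)

theorem bwV_open {U : Set ℂ} (hU : IsOpen U) {z' : ℂ} {l : ℂ → ℂ} (hl : BwLog U z' l) (j : ℤ) :
    IsOpen (bwV U l j) := by
  let W : Set ℂ := {w | z' + Complex.exp w ∈ U}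
  have hW : IsOpen W := hU.preimage (by fun_prop)
  let k : ℂ → ℂ := fun w => w - l (z' + Complex.exp w) - j * bwT
  have hk : ContinuousOn k W := by
    have : ContinuousOn (fun w => l (z' + Complex.exp w)) W :=
      hl.cont.comp (by fun_prop) (fun w hw => hw)
    exact (continuousOn_id.sub this).sub continuousOn_const
  have hO := hk.isOpen_inter_preimage hW (isOpen_ball (x := (0 : ℂ)) (ε := 1))
  convert hO using 1
  ext w
  constructor
  · rintro ⟨z, hz, rfl⟩
    have h1 : z' + Complex.exp (l z + j * bwT) = z := by rw [bw_exp_add_T, hl.exp z hz]; ring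
    refine ⟨by simp only [W, mem_ofPred_eq]; rw [h1]; exact hz, ?_⟩
    simp only [mem_preimage, k]
    rw [h1]; simp
  · rintro ⟨hw, hb⟩
    simp only [mem_preimage, mem_ball, dist_zero_right] at hb
    refine ⟨z' + Complex.exp w, hw, ?_⟩
    have h1 : Complex.exp w = Complex.exp (l (z' + Complex.exp w)) := by
      rw [hl.exp _ hw]; ring
    obtain ⟨i, hi⟩ := bw_exp_eq h1
    change w = _ + i * bwT at hi
    have h2 : k w = ((i - j : ℤ) : ℂ) * bwT := by
      simp only [k]; push_cast; linear_combination hi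
    have h3 : i = j := by
      by_contra hne
      have h4 : (1 : ℝ) ≤ |((i - j : ℤ) : ℝ)| := by
        have : 1 ≤ |i - j| := Int.one_le_abs (sub_ne_zero.2 hne)
        exact_mod_cast this
      have h5 : ‖k w‖ = |((i - j : ℤ) : ℝ)| * (2 * Real.pi) := by
        rw [h2, norm_mul, Complex.norm_intCast, bwT]
        simp [abs_of_pos Real.pi_pos]
      rw [h5] at hb
      nlinarith [Real.pi_gt_three]
    subst h3
    exact hi.symm

theorem bw_two_returns {f : ℂ ≃ₜ ℂ} {I : HIsotopy f} {z' : ℂ} {F : ℝ → ℂ → ℂ} (h : BwLift I z' F)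
    (hz' : z' ∈ FixPts ⇑f) {U : Set ℂ} (hU : FreeDisc f U) {l : ℂ → ℂ} (hl : BwLog U z' l)
    {M : ℝ} (hM : ∀ z ∈ FixPts ⇑f, ∀ z' ∈ FixPts ⇑f, z ≠ z' → |Enlace I z z'| ≤ M) (p : ℤ)
    (hp : M < |(p : ℝ)|) {z1 z2 : ℂ} (hz1 : z1 ∈ U) (hz2 : z2 ∈ U) (n1 n2 : ℕ) (hn1 : 1 ≤ n1)
    (hn2 : 1 ≤ n2) (hr1 : f^[n1] z1 ∈ U) (hr2 : f^[n2] z2 ∈ U) (j1 j2 : ℤ)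
    (hj1 : (F 1)^[n1] (l z1) = l (f^[n1] z1) + j1 * bwT)
    (hj2 : (F 1)^[n2] (l z2) = l (f^[n2] z2) + j2 * bwT)
    (h1 : n1 * p < j1) (h2 : j2 < n2 * p) : False := by
  obtain ⟨e⟩ := hU.2.1
  have hrel : ∀ (z : ℂ) (n : ℕ) (j : ℤ), z ∈ U → 1 ≤ n → f^[n] z ∈ U →
      (F 1)^[n] (l z) = l (f^[n] z) + j * bwT → ∀ i i' : ℤ, i' = i + (j - n * p) →
      BwRel (fun w => F 1 w - p * bwT) (bwV U l i) (bwV U l i') := by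
    intro z n j hz hn hr hj i i' hi
    refine ⟨n, hn, l z + i * bwT, ⟨z, hz, rfl⟩, f^[n] z, hr, ?_⟩
    simp only
    rw [h.iter_G, h.per1, hj, hi]
    push_cast; ring
  obtain ⟨a, ha⟩ := Int.eq_ofNat_of_zero_le (by linarith : 0 ≤ j1 - n1 * p)
  obtain ⟨b, hb⟩ := Int.eq_ofNat_of_zero_le (by linarith : 0 ≤ n2 * p - j2)
  have ha0 : 1 ≤ a := by omega
  refine bw_franks (bwV U l) (bwV_open hU.1 hl) ?_ (bwV_disj hl) (a + b) (by omega) _ (h.nice p)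
    (h.no_fix hz' hM p hp) ?_
    (fun i => if i ≤ b then (i : ℤ) * a else (b : ℤ) * a - ((i : ℤ) - b) * b) ?_ ?_
  · intro j
    exact (bw_U_preconn e).image _ (hl.cont.add continuousOn_const)
  · rintro j _ ⟨z, hz, rfl⟩ ⟨u, hu, huz⟩
    simp only at huz
    apply bw_free_image hU hz
    have e1 := h.exp_one hz' (l z + j * bwT)
    have e2 : Complex.exp (l u + j * bwT) = Complex.exp (F 1 (l z + j * bwT) + (-p : ℤ) * bwT) := by
      rw [huz]; congr 1; push_cast; ring
    rw [bw_exp_add_T, bw_exp_add_T, hl.exp _ hu] at e2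
    rw [← e2, bw_exp_add_T, hl.exp _ hz, add_sub_cancel, add_sub_cancel] at e1
    rw [← e1]; exact hu
  · rw [if_neg (by omega), if_pos (by omega)]
    push_cast; ring
  · intro i hi
    rcases lt_or_ge i b with hib | hib
    · rw [if_pos hib.le, if_pos (by omega)]
      apply hrel z1 n1 j1 hz1 hn1 hr1 hj1
      rw [ha]; push_cast; ring
    · rw [if_neg (by omega : ¬ i + 1 ≤ b)]
      apply hrel z2 n2 j2 hz2 hn2 hr2 hj2
      have hb' : j2 - n2 * p = - (b : ℤ) := by omega
      rw [hb']
      rcases eq_or_lt_of_le hib with h' | h'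
      · subst h'; rw [if_pos le_rfl]; push_cast; ring
      · rw [if_neg (by omega)]; push_cast; ring

/-! ### Part E : uniform bounds -/

theorem bw_rouche {p q : ℝ → ℂ} (hp : ContinuousOn p (Icc 0 1)) (hq : ContinuousOn q (Icc 0 1))
    (h : ∀ t ∈ Icc (0 : ℝ) 1, ‖p t + q t‖ < ‖q t‖) : |angVar p - angVar q| ≤ 1 := by
  have hq0 : ∀ t ∈ Icc (0 : ℝ) 1, q t ≠ 0 := by
    intro t ht h0
    have := h t ht
    rw [h0, norm_zero] at this
    exact absurd this (not_lt.2 (norm_nonneg _))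
  obtain ⟨L, hLc, hL⟩ := bw_exists_log (convex_Icc (0 : ℝ) 1) ⟨0, by simp⟩ hq hq0
  have hre : ∀ t ∈ Icc (0 : ℝ) 1, 0 < (-(p t) / q t).re := by
    intro t ht
    have h1 : ‖1 - (-(p t) / q t)‖ < 1 := by
      have : 1 - (-(p t) / q t) = (p t + q t) / q t := by
        have := hq0 t ht
        field_simp; ring
      rw [this, norm_div, div_lt_one (norm_pos_iff.2 (hq0 t ht))]
      exact h t ht
    have h2 := (Complex.re_le_norm _).trans_lt h1
    simp only [Complex.sub_re, Complex.one_re] at h2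
    linarith
  have hne : ∀ t ∈ Icc (0 : ℝ) 1, -(p t) / q t ≠ 0 := by
    intro t ht h0
    have := hre t ht
    rw [h0] at this; simp at this
  have hlogc : ContinuousOn (fun t => Complex.log (-(p t) / q t)) (Icc 0 1) := by
    apply ContinuousOn.clog (hp.neg.div hq hq0)
    intro t ht
    exact Or.inl (hre t ht)
  have e1 := bw_angVar_eq hLc hL
  have e2 := bw_angVar_eq (γ := p)
    (L := fun t => L t + Complex.log (-(p t) / q t) + Real.pi * Complex.I)
    ((hLc.add hlogc).add continuousOn_const) (by
      intro t ht
      rw [Complex.exp_add, Complex.exp_add, hL t ht, Complex.exp_log (hne t ht), Complex.exp_pi_mul_I]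
      have := hq0 t ht
      field_simp)
  rw [e1, e2]
  simp only [Complex.add_im]
  have a1 := Complex.abs_arg_le_pi (-(p 1) / q 1)
  have a0 := Complex.abs_arg_le_pi (-(p 0) / q 0)
  rw [Complex.log_im, Complex.log_im, ← sub_div, abs_div, abs_of_pos (by positivity : 0 < 2 * Real.pi),
    div_le_one (by positivity)]
  rw [abs_le] at a1 a0 ⊢
  constructor <;> linarith [a1.1, a1.2, a0.1, a0.2]

theorem bw_bdd {f : ℂ ≃ₜ ℂ} (J : HIsotopy f) {S : Set ℂ} (hS : IsClosed S) {a : ℝ → ℂ}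
    (ha : ContinuousOn a (Icc 0 1)) (hne : ∀ u ∈ S, ∀ t ∈ Icc (0 : ℝ) 1, J.F t u ≠ a t)
    {K : Set ℂ} (hK : IsCompact K) (hT : ∀ u ∈ S \ K, angVar (fun t => J.F t u) = 0) :
    ∃ A : ℝ, ∀ u ∈ S, |angVar (fun t => a t - J.F t u)| ≤ A := by
  let a' : ℝ → ℂ := IccExtend (zero_le_one' ℝ) ((Icc (0 : ℝ) 1).domRestrict a)
  have ha' : Continuous a' := (continuousOn_iff_continuous_domRestrict.1 ha).Icc_extend'
  have haa : ∀ t ∈ Icc (0 : ℝ) 1, a' t = a t := by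
    intro t ht
    simp only [a']
    rw [IccExtend_of_mem _ _ ht]; rfl
  have hJ := J.cont
  -- local continuity
  have hcont : ContinuousOn (fun u => angVar (fun t => a t - J.F t u)) S := by
    intro u0 hu0
    have htube : ∀ᶠ u in 𝓝 u0, ∀ t ∈ Icc (0 : ℝ) 1, a' t - J.F t u ≠ 0 := by
      apply isCompact_Icc.eventually_forall_of_forall_eventually
      intro t ht
      have hc : Continuous fun z : ℂ × ℝ => a' z.2 - J.F z.2 z.1 :=
        (ha'.comp continuous_snd).sub (hJ.comp (continuous_snd.prodMk continuous_fst))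
      have h0 : a' t - J.F t u0 ≠ 0 := by
        rw [haa t ht]; exact sub_ne_zero.2 (hne u0 hu0 t ht).symm
      exact hc.continuousAt.eventually_ne h0
    obtain ⟨r, hr, hball⟩ := Metric.eventually_nhds_iff_ball.1 htube
    obtain ⟨L, hLc, hL⟩ := bw_exists_log (X := Icc (0 : ℝ) 1 ×ˢ ball u0 r)
      (Q := fun q => a' q.1 - J.F q.1 q.2)
      ((convex_Icc 0 1).prod (convex_ball u0 r)) ⟨(0, u0), by simp [hr]⟩
      ((ha'.comp continuous_fst).sub hJ).continuousOn
      (fun q hq => hball q.2 hq.2 q.1 hq.1)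
    have hval : ∀ u ∈ ball u0 r, angVar (fun t => a t - J.F t u)
        = ((L (1, u)).im - (L (0, u)).im) / (2 * Real.pi) := by
      intro u hu
      apply bw_angVar_eq (L := fun t => L (t, u))
      · exact hLc.comp (by fun_prop) (fun t ht => ⟨ht, hu⟩)
      · intro t ht
        rw [hL _ ⟨ht, hu⟩, haa t ht]
    have h1 : ContinuousOn (fun u => ((L (1, u)).im - (L (0, u)).im) / (2 * Real.pi)) (ball u0 r) := by
      have c1 : ContinuousOn (fun u => L (1, u)) (ball u0 r) :=
        hLc.comp (by fun_prop) (fun u hu => ⟨by simp, hu⟩)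
      have c0 : ContinuousOn (fun u => L (0, u)) (ball u0 r) :=
        hLc.comp (by fun_prop) (fun u hu => ⟨by simp, hu⟩)
      exact ((Complex.continuous_im.comp_continuousOn c1).sub
        (Complex.continuous_im.comp_continuousOn c0)).div_const _
    exact ((h1.congr hval).continuousAt (ball_mem_nhds u0 hr)).continuousWithinAt
  -- properness
  obtain ⟨C, hC⟩ := (isCompact_Icc.image_of_continuousOn ha).isBounded.exists_norm_le
  let K2 : Set ℂ := (fun p : ℝ × ℂ => (J.F p.1).symm p.2) '' (Icc (0 : ℝ) 1 ×ˢ closedBall 0 C)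
  have hK2 : IsCompact K2 := (isCompact_Icc.prod (isCompact_closedBall 0 C)).image J.cont_symm
  have hSK : IsCompact (S ∩ (K ∪ K2)) := (hK.union hK2).inter_left hS
  obtain ⟨A, hA⟩ := (hSK.image_of_continuousOn (hcont.mono inter_subset_left)).isBounded.exists_norm_le
  refine ⟨max A 1, fun u hu => ?_⟩
  by_cases huK : u ∈ K ∪ K2
  · exact (hA _ ⟨u, ⟨hu, huK⟩, rfl⟩).trans (le_max_left _ _)
  · rw [mem_union, not_or] at huK
    have h0 := hT u ⟨hu, huK.1⟩
    have hcu : Continuous fun t => J.F t u := hJ.comp (by fun_prop : Continuous fun t : ℝ => (t, u))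
    have := bw_rouche (p := fun t => a t - J.F t u) (q := fun t => J.F t u)
      (ha.sub hcu.continuousOn) hcu.continuousOn (by
        intro t ht
        rw [sub_add_cancel]
        refine lt_of_le_of_lt (hC _ ⟨t, ht, rfl⟩) ?_
        by_contra hcon
        push Not at hcon
        apply huK.2
        exact ⟨(t, J.F t u), ⟨ht, by simpa using hcon⟩, by simp⟩)
    rw [h0, sub_zero] at this
    exact this.trans (le_max_right _ _)

theorem bw_fix_closed (f : ℂ ≃ₜ ℂ) : IsClosed (FixPts ⇑f) :=
  isClosed_eq f.continuous continuous_id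

theorem bw_iter_not_fix {f : ℂ ≃ₜ ℂ} {U : Set ℂ} (hU : FreeDisc f U) {z : ℂ} (hz : z ∈ U) (n : ℕ) :
    f^[n] z ∉ FixPts ⇑f := by
  intro h
  have h1 : f (f^[n] z) = f^[n] z := h
  rw [← Function.iterate_succ_apply' (⇑f), Function.iterate_succ_apply] at h1
  have h2 := (f.injective.iterate n) h1
  exact bw_free_not_mem hU h2 hz

theorem bw_bdd_alpha {f : ℂ ≃ₜ ℂ} (I : HIsotopy f) (hA : Adapted I) {U : Set ℂ} (hU : FreeDisc f U)
    {z : ℂ} (hz : z ∈ U) : ∃ A : ℝ, ∀ z' ∈ FixPts ⇑f, |alphaU I U z' z| ≤ A := by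
  obtain ⟨K, hK, hKT⟩ := hA
  have h1 : ∀ r : ℕ, ∃ A : ℝ, ∀ z' ∈ FixPts ⇑f, |Enlace I (f^[r] z) z'| ≤ A := by
    intro r
    refine bw_bdd I (bw_fix_closed f) (a := fun t => I.F t (f^[r] z)) ?_ ?_ hK hKT
    · exact (I.cont.comp (by fun_prop : Continuous fun t : ℝ => (t, f^[r] z))).continuousOn
    · intro u hu t _ h
      have := (I.F t).injective h
      rw [this] at hu
      exact bw_iter_not_fix hU hz r hu
  choose A hA using h1
  obtain ⟨e⟩ := hU.2.1
  have hex : ∃ γ : ℝ → ℂ, IsPathIn U (f^[retTime f U z] z) z γ := bw_U_path e (bw_ret_mem hz) hz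
  obtain ⟨g1, g2, g3, g4⟩ := hex.choose_spec
  let J : HIsotopy (Homeomorph.refl ℂ) := ⟨fun _ => Homeomorph.refl ℂ, by simpa using continuous_snd,
    by simpa using continuous_snd, rfl, rfl⟩
  obtain ⟨B, hB⟩ := bw_bdd J (bw_fix_closed f) (a := hex.choose) g1 (by
      intro u hu t ht h
      have h' : u = hex.choose t := h
      rw [h'] at hu
      exact bw_free_not_mem hU hu (g2 t ht)) (K := {0}) isCompact_singleton (by
      intro u hu
      have hu0 : u ≠ 0 := hu.2
      have := bw_angVar_eq (γ := fun t => J.F t u) (L := fun _ => Complex.log u) continuousOn_const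
        (fun t _ => Complex.exp_log hu0)
      rw [this]; simp)
  refine ⟨∑ r ∈ Finset.range (retTime f U z), A r + B, fun z' hz' => ?_⟩
  unfold alphaU
  rw [dif_pos hex]
  refine (abs_add_le _ _).trans (add_le_add ?_ (hB z' hz'))
  exact (Finset.abs_sum_le_sum_abs _ _).trans (Finset.sum_le_sum fun r _ => hA r z' hz')

theorem bw_alpha_zero {f : ℂ ≃ₜ ℂ} (I : HIsotopy f) {U : Set ℂ} (hU : FreeDisc f U) {z z' : ℂ}
    (hz' : z' ∈ FixPts ⇑f) (hz : z ∈ U) (h0 : retTime f U z = 0) : alphaU I U z' z = 0 := by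
  obtain ⟨e⟩ := hU.2.1
  obtain ⟨F, hF⟩ := bw_exists_lift I z'
  obtain ⟨l, hl⟩ := bw_exists_logU e (bw_free_not_mem hU hz')
  obtain ⟨j, hj1, hj2⟩ := bw_alpha hF hz' e hl hz
  rw [h0] at hj2
  simp only [Function.iterate_zero, id_eq] at hj2
  have h3 : (j : ℂ) * bwT = 0 := by linear_combination -hj2
  rcases mul_eq_zero.1 h3 with h4 | h4
  · rw [hj1]; exact_mod_cast h4
  · exact absurd h4 bwT_ne

theorem bw_bound {f : ℂ ≃ₜ ℂ} (I : HIsotopy f) (hP1 : P1 I) (hA : Adapted I) {U : Set ℂ}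
    (hU : FreeDisc f U) : ∃ P : ℕ, ∀ z' ∈ FixPts ⇑f, ∀ z ∈ U,
      |alphaU I U z' z| ≤ P * retTime f U z := by
  by_cases hex : ∃ z0 ∈ U, 1 ≤ retTime f U z0
  swap
  · push Not at hex
    refine ⟨0, fun z' hz' z hz => ?_⟩
    rw [bw_alpha_zero I hU hz' hz (by have := hex z hz; omega)]
    simp
  obtain ⟨z0, hz0, hτ0⟩ := hex
  obtain ⟨M, hM⟩ := hP1
  obtain ⟨A, hA⟩ := bw_bdd_alpha I hA hU hz0
  obtain ⟨P, hP⟩ := exists_nat_gt (max M A)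
  have hPM : M < P := (le_max_left _ _).trans_lt hP
  have hPA : A < P := (le_max_right _ _).trans_lt hP
  refine ⟨P, fun z' hz' z hz => ?_⟩
  rcases Nat.eq_zero_or_pos (retTime f U z) with h0 | h0
  · rw [bw_alpha_zero I hU hz' hz h0, h0]; simp
  obtain ⟨e⟩ := hU.2.1
  obtain ⟨F, hF⟩ := bw_exists_lift I z'
  obtain ⟨l, hl⟩ := bw_exists_logU e (bw_free_not_mem hU hz')
  obtain ⟨j, hj1, hj2⟩ := bw_alpha hF hz' e hl hz
  obtain ⟨i, hi1, hi2⟩ := bw_alpha hF hz' e hl hz0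
  have hi3 := hA z' hz'
  rw [hi1, abs_le] at hi3
  have hτ0' : (1 : ℝ) ≤ retTime f U z0 := by exact_mod_cast hτ0
  have hP0 : (0 : ℝ) ≤ P := by positivity
  have hPτ : (P : ℝ) ≤ retTime f U z0 * P := by nlinarith
  rw [hj1]
  by_contra hcon
  push Not at hcon
  rcases lt_abs.1 hcon with h | h
  · refine bw_two_returns hF hz' hU hl hM P ?_ hz hz0 _ _ h0 hτ0 (bw_ret_mem hz) (bw_ret_mem hz0)
      j i hj2 hi2 ?_ ?_
    · rw [Int.cast_natCast, abs_of_nonneg hP0]; exact hPM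
    · rw [mul_comm]; exact_mod_cast h
    · have : (i : ℝ) < retTime f U z0 * P := by linarith
      exact_mod_cast this
  · refine bw_two_returns hF hz' hU hl hM (-P) ?_ hz0 hz _ _ hτ0 h0 (bw_ret_mem hz0) (bw_ret_mem hz)
      i j hi2 hj2 ?_ ?_
    · push_cast; rw [abs_neg, abs_of_nonneg hP0]; exact hPM
    · have : (retTime f U z0 : ℝ) * (-P) < i := by linarith
      exact_mod_cast this
    · have : (j : ℝ) < retTime f U z * (-P) := by linarith
      exact_mod_cast this

/-! ### Part F : measurability and integrability -/

theorem bw_ret_eq_iff {f : ℂ ≃ₜ ℂ} {U : Set ℂ} {z : ℂ} {n : ℕ} (hn : 0 < n) :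
    retTime f U z = n ↔ f^[n] z ∈ U ∧ ∀ k, 0 < k → k < n → f^[k] z ∉ U := by
  unfold retTime
  constructor
  · intro h
    have hne : {n : ℕ | 0 < n ∧ (⇑f)^[n] z ∈ U}.Nonempty := Nat.nonempty_of_pos_sInf (by omega)
    have h1 := Nat.sInf_mem hne
    rw [h] at h1
    refine ⟨h1.2, fun k hk hkn hkU => ?_⟩
    have : sInf {n : ℕ | 0 < n ∧ (⇑f)^[n] z ∈ U} ≤ k := Nat.sInf_le ⟨hk, hkU⟩
    omega
  · rintro ⟨h1, h2⟩
    refine le_antisymm (Nat.sInf_le ⟨hn, h1⟩) (le_csInf ⟨n, hn, h1⟩ ?_)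
    rintro k ⟨hk, hkU⟩
    by_contra hcon
    exact h2 k hk (by omega) hkU

theorem bw_ret_le {f : ℂ ≃ₜ ℂ} {U : Set ℂ} {z : ℂ} {k : ℕ} (hk : 0 < k) (hkU : f^[k] z ∈ U) :
    retTime f U z ≤ k ∧ 0 < retTime f U z := by
  have hmem : k ∈ {n : ℕ | 0 < n ∧ (⇑f)^[n] z ∈ U} := ⟨hk, hkU⟩
  exact ⟨Nat.sInf_le hmem, (Nat.sInf_mem ⟨k, hmem⟩).1⟩

theorem bw_ret_measurable (f : ℂ ≃ₜ ℂ) {U : Set ℂ} (hU : IsOpen U) : Measurable (retTime f U) := by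
  have hpos : ∀ n : ℕ, 0 < n → MeasurableSet (retTime f U ⁻¹' {n}) := by
    intro n hn
    have : retTime f U ⁻¹' {n} = f^[n] ⁻¹' U ∩ ⋂ k : ℕ, {z | 0 < k → k < n → f^[k] z ∉ U} := by
      ext z
      simp only [mem_preimage, mem_singleton_iff, mem_inter_iff, mem_iInter, bw_ret_eq_iff hn]
      rfl
    rw [this]
    have hm : ∀ k : ℕ, MeasurableSet (f^[k] ⁻¹' U) := fun k =>
      (hU.preimage (f.continuous.iterate k)).measurableSet
    refine (hm n).inter (MeasurableSet.iInter fun k => ?_)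
    by_cases hk : 0 < k ∧ k < n
    · have : {z | 0 < k → k < n → f^[k] z ∉ U} = (f^[k] ⁻¹' U)ᶜ := by
        ext z; simp [hk.1, hk.2]
      rw [this]; exact (hm k).compl
    · have : {z | 0 < k → k < n → f^[k] z ∉ U} = univ := by
        ext z
        simp only [mem_univ, iff_true]
        intro h1 h2; exact absurd ⟨h1, h2⟩ hk
      rw [this]; exact MeasurableSet.univ
  apply measurable_to_countable'
  intro n
  rcases Nat.eq_zero_or_pos n with h | h
  · subst h
    have : retTime f U ⁻¹' {0} = (⋃ n : ℕ, retTime f U ⁻¹' {n + 1})ᶜ := by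
      ext z
      simp only [mem_preimage, mem_singleton_iff, mem_compl_iff, mem_iUnion, not_exists]
      constructor
      · intro h n; omega
      · intro h
        by_contra hne
        exact h (retTime f U z - 1) (by omega)
    rw [this]
    exact (MeasurableSet.iUnion fun n => hpos (n + 1) (by omega)).compl
  · exact hpos n h

theorem bw_kac (f : ℂ ≃ₜ ℂ) {U : Set ℂ} (hU : IsOpen U) (ν : Measure ℂ)
    (hf : MeasurePreserving f ν ν) :
    ∫⁻ z in U, (retTime f U z : ENNReal) ∂ν ≤ ν univ := by
  have hτ := bw_ret_measurable f hU
  let A : ℕ → Set ℂ := fun n => U ∩ {z | n < retTime f U z}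
  have hA : ∀ n, MeasurableSet (A n) := fun n =>
    hU.measurableSet.inter (measurableSet_lt measurable_const hτ)
  have hsymm : MeasurePreserving f.symm ν ν := by
    have : MeasurePreserving f.toMeasurableEquiv ν ν := hf
    exact this.symm
  let B : ℕ → Set ℂ := fun n => f.symm^[n] ⁻¹' A n
  have hB : ∀ n, ν (B n) = ν (A n) := fun n =>
    (hsymm.iterate n).measure_preimage (hA n).nullMeasurableSet
  have hBm : ∀ n, MeasurableSet (B n) := fun n => (hsymm.iterate n).measurable (hA n)
  have hdisj : ∀ m n, m < n → Disjoint (B m) (B n) := by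
    intro m n hmn
    rw [Set.disjoint_left]
    rintro x ⟨hx1, hx2⟩ ⟨hy1, hy2⟩
    have hy2' : n < retTime f U (f.symm^[n] x) := hy2
    have h1 : f^[n - m] (f.symm^[n] x) = f.symm^[m] x := by
      have : n = (n - m) + m := by omega
      conv_lhs => rw [this, Function.iterate_add_apply f.symm]
      rw [Nat.add_sub_cancel]
      exact (Function.LeftInverse.iterate f.apply_symm_apply (n - m)) _
    have := (bw_ret_le (f := f) (U := U) (z := f.symm^[n] x) (k := n - m) (by omega)
      (by rw [h1]; exact hx1)).1
    omega
  have hpw : Pairwise (Function.onFun Disjoint B) := by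
    intro m n hmn
    rcases lt_or_gt_of_ne hmn with h | h
    · exact hdisj m n h
    · exact (hdisj n m h).symm
  have hsum : ∀ z ∈ U, (retTime f U z : ENNReal) = ∑' n, (A n).indicator 1 z := by
    intro z hz
    have : ∀ n, (A n).indicator (1 : ℂ → ENNReal) z = if n < retTime f U z then 1 else 0 := by
      intro n
      simp only [Set.indicator_apply]
      congr 1
      simp [A, hz]
    simp_rw [this]
    rw [tsum_eq_sum (s := Finset.range (retTime f U z))]
    · rw [Finset.sum_congr rfl (g := fun _ => (1 : ENNReal))]
      · simp
      · intro n hn; rw [if_pos (Finset.mem_range.1 hn)]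
    · intro n hn
      rw [Finset.mem_range] at hn
      rw [if_neg hn]
  calc ∫⁻ z in U, (retTime f U z : ENNReal) ∂ν = ∫⁻ z in U, ∑' n, (A n).indicator 1 z ∂ν :=
        setLIntegral_congr_fun hU.measurableSet hsum
    _ ≤ ∫⁻ z, ∑' n, (A n).indicator 1 z ∂ν := setLIntegral_le_lintegral _ _
    _ = ∑' n, ∫⁻ z, (A n).indicator 1 z ∂ν :=
        lintegral_tsum fun n => (measurable_one.indicator (hA n)).aemeasurable
    _ = ∑' n, ν (A n) := by
        congr 1; funext n; rw [lintegral_indicator_one (hA n)]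
    _ = ∑' n, ν (B n) := by simp_rw [hB]
    _ = ν (⋃ n, B n) := (measure_iUnion hpw hBm).symm
    _ ≤ ν univ := measure_mono (subset_univ _)

theorem bw_alpha_cont {f : ℂ ≃ₜ ℂ} (I : HIsotopy f) {U : Set ℂ} (hU : FreeDisc f U) {z' : ℂ}
    (hz' : z' ∈ FixPts ⇑f) (n : ℕ) :
    ContinuousOn (fun z => |alphaU I U z' z|) (U ∩ retTime f U ⁻¹' {n}) := by
  obtain ⟨e⟩ := hU.2.1
  obtain ⟨F, hF⟩ := bw_exists_lift I z'
  obtain ⟨l, hl⟩ := bw_exists_logU e (bw_free_not_mem hU hz')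
  have h1 : ContinuousOn (fun z => (F 1)^[n] (l z)) (U ∩ retTime f U ⁻¹' {n}) :=
    ((hF.cont1 1).iterate n).comp_continuousOn (hl.cont.mono inter_subset_left)
  have h2 : ContinuousOn (fun z => l (f^[n] z)) (U ∩ retTime f U ⁻¹' {n}) := by
    refine hl.cont.comp (f.continuous.iterate n).continuousOn ?_
    rintro z ⟨hz, hn⟩
    have := bw_ret_mem (f := f) hz
    rw [hn] at this; exact this
  have h3 : ContinuousOn (fun z => |(((F 1)^[n] (l z)).im - (l (f^[n] z)).im) / (2 * Real.pi)|)
      (U ∩ retTime f U ⁻¹' {n}) :=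
    (((Complex.continuous_im.comp_continuousOn h1).sub
      (Complex.continuous_im.comp_continuousOn h2)).div_const _).abs
  refine h3.congr ?_
  rintro z ⟨hz, hn⟩
  obtain ⟨j, hj1, hj2⟩ := bw_alpha hF hz' e hl hz
  have hn' : retTime f U z = n := hn
  rw [hn'] at hj2
  simp only
  rw [bw_im_T _ _ _ hj2, hj1]

theorem bw_hat_nonneg {f : ℂ ≃ₜ ℂ} (I : HIsotopy f) (U : Set ℂ) (R : ℝ) (z : ℂ) :
    0 ≤ alphaHat I U R z := by
  apply Real.sSup_nonneg
  rintro a ⟨z', -, -, rfl⟩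
  exact abs_nonneg _

theorem bw_hat_bdd {f : ℂ ≃ₜ ℂ} {I : HIsotopy f} {U : Set ℂ} {P : ℕ}
    (hP : ∀ z' ∈ FixPts ⇑f, ∀ z ∈ U, |alphaU I U z' z| ≤ P * retTime f U z) (R : ℝ) {z : ℂ}
    (hz : z ∈ U) : BddAbove {a : ℝ | ∃ z' ∈ FixPts ⇑f, R ≤ ‖z'‖ ∧ a = |alphaU I U z' z|} := by
  refine ⟨P * retTime f U z, ?_⟩
  rintro a ⟨z', hz', -, rfl⟩
  exact hP z' hz' z hz

theorem bw_hat_le {f : ℂ ≃ₜ ℂ} {I : HIsotopy f} {U : Set ℂ} {P : ℕ}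
    (hP : ∀ z' ∈ FixPts ⇑f, ∀ z ∈ U, |alphaU I U z' z| ≤ P * retTime f U z) (R : ℝ) {z : ℂ}
    (hz : z ∈ U) : alphaHat I U R z ≤ P * retTime f U z := by
  apply Real.sSup_le
  · rintro a ⟨z', hz', -, rfl⟩
    exact hP z' hz' z hz
  · positivity

theorem bw_le_hat {f : ℂ ≃ₜ ℂ} {I : HIsotopy f} {U : Set ℂ} {P : ℕ}
    (hP : ∀ z' ∈ FixPts ⇑f, ∀ z ∈ U, |alphaU I U z' z| ≤ P * retTime f U z) {R : ℝ} {z z' : ℂ}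
    (hz : z ∈ U) (hz' : z' ∈ FixPts ⇑f) (hR : R ≤ ‖z'‖) : |alphaU I U z' z| ≤ alphaHat I U R z :=
  le_csSup (bw_hat_bdd hP R hz) ⟨z', hz', hR, rfl⟩

theorem bw_hat_measurable {f : ℂ ≃ₜ ℂ} {I : HIsotopy f} {U : Set ℂ} (hU : FreeDisc f U) {P : ℕ}
    (hP : ∀ z' ∈ FixPts ⇑f, ∀ z ∈ U, |alphaU I U z' z| ≤ P * retTime f U z) (R : ℝ) :
    Measurable (U.indicator (alphaHat I U R)) := by
  apply measurable_of_Ioi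
  intro c
  rcases lt_or_ge c 0 with hc | hc
  · have : U.indicator (alphaHat I U R) ⁻¹' Ioi c = univ := by
      ext z
      simp only [mem_preimage, mem_Ioi, mem_univ, iff_true]
      exact hc.trans_le (Set.indicator_nonneg (fun z _ => bw_hat_nonneg I U R z) z)
    rw [this]; exact MeasurableSet.univ
  · have hO : ∀ (n : ℕ) (z' : ℂ), ∃ O : Set ℂ, IsOpen O ∧ (z' ∈ FixPts ⇑f →
        (fun z => |alphaU I U z' z|) ⁻¹' Ioi c ∩ (U ∩ retTime f U ⁻¹' {n})
          = O ∩ (U ∩ retTime f U ⁻¹' {n})) := by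
      intro n z'
      by_cases hz' : z' ∈ FixPts ⇑f
      · obtain ⟨O, h1, h2⟩ := continuousOn_iff'.1 (bw_alpha_cont I hU hz' n) _ (isOpen_Ioi (a := c))
        exact ⟨O, h1, fun _ => h2⟩
      · exact ⟨∅, isOpen_empty, fun h => absurd h hz'⟩
    choose O hO1 hO2 using hO
    have : U.indicator (alphaHat I U R) ⁻¹' Ioi c
        = ⋃ n : ℕ, (⋃ z' ∈ {z' | z' ∈ FixPts ⇑f ∧ R ≤ ‖z'‖}, O n z') ∩ (U ∩ retTime f U ⁻¹' {n}) := by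
      ext z
      simp only [mem_preimage, mem_Ioi, mem_iUnion, mem_inter_iff, mem_singleton_iff]
      constructor
      · intro h
        have hz : z ∈ U := by
          by_contra hz
          rw [Set.indicator_of_notMem hz] at h
          linarith
        rw [Set.indicator_of_mem hz] at h
        have hne : {a : ℝ | ∃ z' ∈ FixPts ⇑f, R ≤ ‖z'‖ ∧ a = |alphaU I U z' z|}.Nonempty := by
          by_contra hne
          rw [Set.not_nonempty_iff_eq_empty] at hne
          unfold alphaHat at h
          rw [hne, Real.sSup_empty] at h
          linarith
        obtain ⟨a, ⟨z', hz', hR, rfl⟩, ha⟩ := exists_lt_of_lt_csSup hne h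
        refine ⟨retTime f U z, ⟨z', ⟨hz', hR⟩, ?_⟩, hz, rfl⟩
        have : z ∈ (fun z => |alphaU I U z' z|) ⁻¹' Ioi c ∩ (U ∩ retTime f U ⁻¹' {retTime f U z}) :=
          ⟨ha, hz, rfl⟩
        rw [hO2 _ _ hz'] at this
        exact this.1
      · rintro ⟨n, ⟨z', ⟨hz', hR⟩, hzO⟩, hz, hn⟩
        have : z ∈ O n z' ∩ (U ∩ retTime f U ⁻¹' {n}) := ⟨hzO, hz, hn⟩
        rw [← hO2 _ _ hz'] at this
        rw [Set.indicator_of_mem hz]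
        exact lt_of_lt_of_le this.1 (bw_le_hat hP hz hz' hR)
    rw [this]
    refine MeasurableSet.iUnion fun n => MeasurableSet.inter ?_
      (hU.1.measurableSet.inter (bw_ret_measurable f hU.1 (measurableSet_singleton n)))
    exact (isOpen_biUnion fun z' _ => hO1 n z').measurableSet

theorem bw_hat_integrable {f : ℂ ≃ₜ ℂ} {I : HIsotopy f} {U : Set ℂ} (hU : FreeDisc f U) {P : ℕ}
    (hP : ∀ z' ∈ FixPts ⇑f, ∀ z ∈ U, |alphaU I U z' z| ≤ P * retTime f U z) (R : ℝ)
    (ν : Measure ℂ) [IsFiniteMeasure ν] (hf : MeasurePreserving f ν ν) :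
    Integrable (U.indicator (alphaHat I U R)) ν := by
  refine ⟨(bw_hat_measurable hU hP R).aestronglyMeasurable, ?_⟩
  rw [hasFiniteIntegral_iff_ofReal (ae_of_all _ fun z =>
    Set.indicator_nonneg (fun z _ => bw_hat_nonneg I U R z) z)]
  calc ∫⁻ z, ENNReal.ofReal (U.indicator (alphaHat I U R) z) ∂ν
      ≤ ∫⁻ z, U.indicator (fun z => (P : ENNReal) * (retTime f U z : ENNReal)) z ∂ν := by
        apply lintegral_mono
        intro z
        by_cases hz : z ∈ U
        · simp only [Set.indicator_of_mem hz]
          refine ENNReal.ofReal_le_of_le_toReal ?_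
          simpa using bw_hat_le hP R hz
        · simp [Set.indicator_of_notMem hz]
    _ = ∫⁻ z in U, (P : ENNReal) * (retTime f U z : ENNReal) ∂ν := by
        rw [lintegral_indicator hU.1.measurableSet]
    _ = (P : ENNReal) * ∫⁻ z in U, (retTime f U z : ENNReal) ∂ν := by
        rw [lintegral_const_mul' _ _ (by simp)]
    _ ≤ (P : ENNReal) * ν univ := by gcongr; exact bw_kac f hU.1 ν hf
    _ < ⊤ := ENNReal.mul_lt_top (by simp) (measure_lt_top ν _)

/-! ### Part G : the maximal ergodic theorem -/

/-- Birkhoff sums. -/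
def bwS {α : Type*} (T : α → α) (φ : α → ℝ) (n : ℕ) (x : α) : ℝ := ∑ r ∈ Finset.range n, φ (T^[r] x)

theorem bwS_succ {α : Type*} (T : α → α) (φ : α → ℝ) (n : ℕ) (x : α) :
    bwS T φ (n + 1) x = φ x + bwS T φ n (T x) := by
  unfold bwS
  rw [Finset.sum_range_succ']
  simp only [Function.iterate_succ_apply, Function.iterate_zero, id_eq]
  ring

/-- running maxima of Birkhoff sums -/
def bwMax {α : Type*} (T : α → α) (ψ : α → ℝ) : ℕ → α → ℝ
  | 0, _ => 0
  | n + 1, x => max (bwMax T ψ n x) (bwS T ψ (n + 1) x)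

theorem bwMax_nonneg {α : Type*} (T : α → α) (ψ : α → ℝ) (n : ℕ) (x : α) : 0 ≤ bwMax T ψ n x := by
  induction n with
  | zero => exact le_rfl
  | succ n ih => exact ih.trans (le_max_left _ _)

theorem bwMax_mono {α : Type*} (T : α → α) (ψ : α → ℝ) (x : α) : Monotone fun n => bwMax T ψ n x :=
  monotone_nat_of_le_succ fun _ => le_max_left _ _

theorem bwS_le_max {α : Type*} (T : α → α) (ψ : α → ℝ) (n : ℕ) (x : α) :
    bwS T ψ n x ≤ bwMax T ψ n x := by
  cases n with
  | zero => simp [bwS, bwMax]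
  | succ n => exact le_max_right _ _

theorem bwMax_le {α : Type*} (T : α → α) (ψ : α → ℝ) (n : ℕ) (x : α) :
    bwMax T ψ n x ≤ max 0 (ψ x + bwMax T ψ n (T x)) := by
  induction n with
  | zero => exact le_max_left _ _
  | succ n ih =>
    apply max_le
    · refine ih.trans (max_le_max le_rfl ?_)
      have := bwMax_mono T ψ (T x) (Nat.le_succ n)
      simp only at this
      linarith
    · rw [bwS_succ]
      refine le_trans ?_ (le_max_right _ _)
      have h1 := bwS_le_max T ψ n (T x)
      have h2 := bwMax_mono T ψ (T x) (Nat.le_succ n)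
      simp only at h2
      linarith

theorem bw_garsia {α : Type*} [MeasurableSpace α] {μ : Measure α} {T : α → α}
    (hT : MeasurePreserving T μ μ) {ψ : α → ℝ} (hψm : Measurable ψ) (hψ : Integrable ψ μ)
    (hpos : ∀ x, ∃ n, 0 < bwS T ψ n x) : 0 ≤ ∫ x, ψ x ∂μ := by
  have hSm : ∀ n, Measurable (bwS T ψ n) := by
    intro n
    unfold bwS
    exact Finset.measurable_fun_sum _ fun r _ => hψm.comp (hT.measurable.iterate r)
  have hSi : ∀ n, Integrable (bwS T ψ n) μ := by
    intro n
    unfold bwS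
    exact integrable_finsetSum _ fun r _ => (hT.iterate r).integrable_comp_of_integrable hψ
  have hMm : ∀ n, Measurable (bwMax T ψ n) := by
    intro n
    induction n with
    | zero => exact measurable_const
    | succ n ih => exact ih.max (hSm (n + 1))
  have hMi : ∀ n, Integrable (bwMax T ψ n) μ := by
    intro n
    induction n with
    | zero => exact integrable_zero _ _ _
    | succ n ih => exact ih.sup (hSi (n + 1))
  let A : ℕ → Set α := fun n => {x | 0 < bwMax T ψ n x}
  have hA : ∀ n, MeasurableSet (A n) := fun n => measurableSet_lt measurable_const (hMm n)
  have hAmono : Monotone A := by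
    intro m n hmn x hx
    exact lt_of_lt_of_le hx (bwMax_mono T ψ x hmn)
  have hU : (⋃ n, A n) = univ := by
    rw [eq_univ_iff_forall]
    intro x
    obtain ⟨n, hn⟩ := hpos x
    exact mem_iUnion.2 ⟨n, lt_of_lt_of_le hn (bwS_le_max T ψ n x)⟩
  have hstep : ∀ n, 0 ≤ ∫ x in A n, ψ x ∂μ := by
    intro n
    have hci : Integrable (fun x => bwMax T ψ n (T x)) μ := hT.integrable_comp_of_integrable (hMi n)
    have hint : ∫ x, bwMax T ψ n (T x) ∂μ = ∫ x, bwMax T ψ n x ∂μ := by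
      have h1 := integral_map (μ := μ) hT.measurable.aemeasurable
        (f := bwMax T ψ n) (by rw [hT.map_eq]; exact (hMm n).aestronglyMeasurable)
      rw [hT.map_eq] at h1
      exact h1.symm
    have h0 : ∫ x, (bwMax T ψ n x - bwMax T ψ n (T x)) ∂μ = 0 := by
      rw [integral_sub (hMi n) hci, hint, sub_self]
    rw [← integral_indicator (hA n), ← h0]
    apply integral_mono ((hMi n).sub hci) (hψ.indicator (hA n))
    intro x
    show bwMax T ψ n x - bwMax T ψ n (T x) ≤ _
    by_cases hx : x ∈ A n
    · rw [Set.indicator_of_mem hx]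
      have h1 := bwMax_le T ψ n x
      have hx' : 0 < bwMax T ψ n x := hx
      rcases le_max_iff.1 h1 with h | h
      · linarith
      · linarith
    · rw [Set.indicator_of_notMem hx]
      have hx' : ¬ 0 < bwMax T ψ n x := hx
      have := bwMax_nonneg T ψ n (T x)
      linarith
  have hlim := tendsto_setIntegral_of_monotone (μ := μ) hA hAmono (f := ψ) (hψ.integrableOn)
  rw [hU, setIntegral_univ] at hlim
  exact ge_of_tendsto' hlim hstep

/-- The limsup of the Birkhoff averages. -/
def bwLim {α : Type*} (T : α → α) (φ : α → ℝ) (x : α) : ENNReal :=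
  limsup (fun n : ℕ => ENNReal.ofReal (bwS T φ n x / n)) atTop

theorem bwLim_lt {α : Type*} {T : α → α} {φ : α → ℝ} {x : α} {c : ℝ}
    (hc : ENNReal.ofReal c < bwLim T φ x) : ∃ n : ℕ, 1 ≤ n ∧ n * c < bwS T φ n x := by
  have h1 := frequently_lt_of_lt_limsup (by isBoundedDefault) hc
  obtain ⟨n, h2, h3⟩ := (h1.and_eventually (eventually_ge_atTop 1)).exists
  refine ⟨n, h3, ?_⟩
  have hn : (0 : ℝ) < n := by exact_mod_cast h3
  have h4 := (ENNReal.ofReal_lt_ofReal_iff').1 h2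
  have := (lt_div_iff₀ hn).1 h4.1
  linarith

theorem bwLim_ge {α : Type*} {T : α → α} {φ : α → ℝ} {x : α} {c : ℝ}
    (hc : ∃ᶠ n : ℕ in atTop, n * c ≤ bwS T φ n x) : ENNReal.ofReal c ≤ bwLim T φ x := by
  apply le_limsup_of_frequently_le _ (by isBoundedDefault)
  refine (hc.and_eventually (eventually_ge_atTop 1)).mono ?_
  rintro n ⟨h1, h2⟩
  apply ENNReal.ofReal_le_ofReal
  have hn : (0 : ℝ) < n := by exact_mod_cast h2
  rw [le_div_iff₀ hn]; linarith

theorem bwS_nonneg {α : Type*} {T : α → α} {φ : α → ℝ} (hφ : ∀ x, 0 ≤ φ x) (n : ℕ) (x : α) :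
    0 ≤ bwS T φ n x := Finset.sum_nonneg fun _ _ => hφ _

theorem bwLim_inv {α : Type*} {T : α → α} {φ : α → ℝ} (hφ : ∀ x, 0 ≤ φ x) (x : α) :
    bwLim T φ (T x) ≤ bwLim T φ x := by
  apply le_of_forall_gt
  intro a ha
  obtain ⟨b, hb1, hb2⟩ := ENNReal.lt_iff_exists_nnreal_btwn.1 ha
  obtain ⟨d, hd1, hd2⟩ := ENNReal.lt_iff_exists_nnreal_btwn.1 hb2
  have hbd : (b : ℝ) < d := by exact_mod_cast hd1
  refine lt_of_le_of_lt ?_ hd2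
  have h1 := eventually_lt_of_limsup_lt hb1
  have h2 : ∀ᶠ n : ℕ in atTop, (b : ℝ) ≤ n * ((d : ℝ) - b) :=
    ((tendsto_natCast_atTop_atTop).atTop_mul_const (sub_pos.2 hbd)).eventually_ge_atTop _
  apply limsup_le_of_le (by isBoundedDefault)
  filter_upwards [(tendsto_add_atTop_nat 1).eventually h1, h2, eventually_ge_atTop 1] with n e1 e2 e3
  have hn : (0 : ℝ) < n := by exact_mod_cast e3
  rw [← ENNReal.ofReal_coe_nnreal (p := d)]
  apply ENNReal.ofReal_le_ofReal
  rw [← ENNReal.ofReal_coe_nnreal (p := b)] at e1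
  have e4 := ((ENNReal.ofReal_lt_ofReal_iff').1 e1).1
  rw [div_lt_iff₀ (by positivity), bwS_succ] at e4
  rw [div_le_iff₀ hn]
  push_cast at e4
  have := hφ x
  nlinarith

theorem bwLim_lintegral {α : Type*} [MeasurableSpace α] {μ : Measure α} [IsFiniteMeasure μ]
    {T : α → α} (hT : MeasurePreserving T μ μ) {φ : α → ℝ} (hφm : Measurable φ)
    (hφ : Integrable φ μ) (hφ0 : ∀ x, 0 ≤ φ x) :
    Measurable (bwLim T φ) ∧ ∫⁻ x, bwLim T φ x ∂μ ≤ ENNReal.ofReal (∫ x, φ x ∂μ) := by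
  have hSm : ∀ n, Measurable (bwS T φ n) := by
    intro n
    unfold bwS
    exact Finset.measurable_fun_sum _ fun r _ => hφm.comp (hT.measurable.iterate r)
  have hLm : Measurable (bwLim T φ) := by
    unfold bwLim
    exact Measurable.limsup fun n => ((hSm n).div_const _).ennreal_ofReal
  refine ⟨hLm, ?_⟩
  let k : ℕ → α → ENNReal := fun M x => min (bwLim T φ x) M
  have hkm : ∀ M, Measurable (k M) := fun M => hLm.min measurable_const
  have hkM : ∀ M x, k M x ≤ M := fun M x => min_le_right _ _
  have hkt : ∀ M x, k M x ≠ ⊤ := fun M x => ne_top_of_le_ne_top (by simp) (hkM M x)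
  have hki : ∀ M, Integrable (fun x => (k M x).toReal) μ := by
    intro M
    refine Integrable.of_bound (hkm M).ennreal_toReal.aestronglyMeasurable M (ae_of_all _ fun x => ?_)
    rw [Real.norm_eq_abs, abs_of_nonneg ENNReal.toReal_nonneg]
    have := ENNReal.toReal_mono (by simp) (hkM M x)
    simpa using this
  have hmain : ∀ (M : ℕ) (ε : ℝ), 0 < ε → ∫ x, (k M x).toReal ∂μ ≤ ∫ x, φ x ∂μ + ε * μ.real univ := by
    intro M ε hε
    have hhi : Integrable (fun x => (k M x).toReal - ε) μ := (hki M).sub (integrable_const ε)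
    have hinv : ∀ x, (k M (T x)).toReal - ε ≤ (k M x).toReal - ε := by
      intro x
      have : (k M (T x)).toReal ≤ (k M x).toReal :=
        ENNReal.toReal_mono (hkt M x) (min_le_min_right _ (bwLim_inv hφ0 x))
      linarith
    have hinvn : ∀ (r : ℕ) x, (k M (T^[r] x)).toReal - ε ≤ (k M x).toReal - ε := by
      intro r
      induction r with
      | zero => intro x; exact le_rfl
      | succ r ih =>
        intro x
        rw [Function.iterate_succ_apply]
        exact (ih (T x)).trans (hinv x)
    have hg := bw_garsia hT (ψ := fun x => φ x - ((k M x).toReal - ε))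
      (hφm.sub ((hkm M).ennreal_toReal.sub measurable_const)) (hφ.sub hhi) (by
        intro x
        have hS : ∀ n : ℕ, bwS T φ n x - n * ((k M x).toReal - ε)
            ≤ bwS T (fun x => φ x - ((k M x).toReal - ε)) n x := by
          intro n
          unfold bwS
          rw [Finset.sum_sub_distrib]
          have : ∑ r ∈ Finset.range n, ((k M (T^[r] x)).toReal - ε)
              ≤ ∑ r ∈ Finset.range n, ((k M x).toReal - ε) := Finset.sum_le_sum fun r _ => hinvn r x
          rw [Finset.sum_const, Finset.card_range, nsmul_eq_mul] at this
          linarith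
        rcases lt_or_ge ((k M x).toReal - ε) 0 with h | h
        · refine ⟨1, lt_of_lt_of_le ?_ (hS 1)⟩
          have := bwS_nonneg (T := T) hφ0 1 x
          push_cast; linarith
        · have : ENNReal.ofReal ((k M x).toReal - ε) < bwLim T φ x := by
            refine lt_of_lt_of_le ?_ (min_le_left _ (M : ENNReal))
            change _ < k M x
            rw [← ENNReal.ofReal_toReal (hkt M x)]
            rw [ENNReal.toReal_ofReal ENNReal.toReal_nonneg]
            exact (ENNReal.ofReal_lt_ofReal_iff (by linarith)).2 (by linarith)
          obtain ⟨n, -, hn⟩ := bwLim_lt this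
          exact ⟨n, lt_of_lt_of_le (by linarith) (hS n)⟩)
    rw [integral_sub hφ hhi, integral_sub (hki M) (integrable_const ε), integral_const] at hg
    rw [smul_eq_mul] at hg
    linarith
  have hmain0 : ∀ M : ℕ, ∫ x, (k M x).toReal ∂μ ≤ ∫ x, φ x ∂μ := by
    intro M
    apply le_of_forall_pos_le_add
    intro ε hε
    have h := hmain M (ε / (μ.real univ + 1)) (by positivity)
    refine h.trans ?_
    have : ε / (μ.real univ + 1) * μ.real univ ≤ ε := by
      rw [div_mul_eq_mul_div, div_le_iff₀ (by positivity)]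
      nlinarith [measureReal_nonneg (μ := μ) (s := univ)]
    linarith
  have hkl : ∀ M : ℕ, ∫⁻ x, k M x ∂μ ≤ ENNReal.ofReal (∫ x, φ x ∂μ) := by
    intro M
    have h1 := ofReal_integral_eq_lintegral_ofReal (hki M) (ae_of_all _ fun x => ENNReal.toReal_nonneg)
    have h2 : ∫⁻ x, k M x ∂μ = ENNReal.ofReal (∫ x, (k M x).toReal ∂μ) := by
      rw [h1]
      congr 1; funext x
      rw [ENNReal.ofReal_toReal (hkt M x)]
    rw [h2]
    exact ENNReal.ofReal_le_ofReal (hmain0 M)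
  have hsup : ∀ x, bwLim T φ x = ⨆ M : ℕ, k M x := by
    intro x
    apply le_antisymm
    · by_cases htop : bwLim T φ x = ⊤
      · have : ∀ M : ℕ, k M x = M := fun M => by simp [k, htop]
        simp_rw [this]
        rw [ENNReal.iSup_natCast]; exact le_top
      · obtain ⟨M, hM⟩ := ENNReal.exists_nat_gt htop
        refine le_iSup_of_le M ?_
        exact le_min le_rfl hM.le
    · exact iSup_le fun M => min_le_left _ _
  simp_rw [hsup]
  rw [lintegral_iSup hkm (by
    intro M N hMN x
    exact min_le_min_left _ (by exact_mod_cast hMN))]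
  exact iSup_le hkl

/-! ### Part H : conclusion -/

theorem bwS_add {α : Type*} (T : α → α) (φ : α → ℝ) (m n : ℕ) (x : α) :
    bwS T φ (m + n) x = bwS T φ m x + bwS T φ n (T^[m] x) := by
  unfold bwS
  rw [Finset.sum_range_add]
  congr 1
  apply Finset.sum_congr rfl
  intro r _
  rw [← Function.iterate_add_apply, add_comm]

theorem bwS_mono {α : Type*} {T : α → α} {φ : α → ℝ} (hφ : ∀ x, 0 ≤ φ x) {m n : ℕ} (h : m ≤ n)
    (x : α) : bwS T φ m x ≤ bwS T φ n x := by
  obtain ⟨k, rfl⟩ := Nat.exists_eq_add_of_le h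
  rw [bwS_add]
  have := bwS_nonneg (T := T) hφ k (T^[m] x)
  linarith

theorem bw_phi_nonneg {f : ℂ ≃ₜ ℂ} (I : HIsotopy f) (U : Set ℂ) (R : ℝ) (z : ℂ) :
    0 ≤ U.indicator (alphaHat I U R) z :=
  Set.indicator_nonneg (fun z _ => bw_hat_nonneg I U R z) z

theorem bw_return_sum {f : ℂ ≃ₜ ℂ} {I : HIsotopy f} {z' : ℂ} {F : ℝ → ℂ → ℂ} (h : BwLift I z' F)
    (hz' : z' ∈ FixPts ⇑f) {U : Set ℂ} (e : U ≃ₜ ℂ) {l : ℂ → ℂ} (hl : BwLog U z' l) {P : ℕ}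
    (hP : ∀ z' ∈ FixPts ⇑f, ∀ z ∈ U, |alphaU I U z' z| ≤ P * retTime f U z) {R : ℝ}
    (hR : R ≤ ‖z'‖) (n : ℕ) : ∀ z ∈ U, f^[n] z ∈ U →
      ∃ j : ℤ, (F 1)^[n] (l z) = l (f^[n] z) + j * bwT ∧
        |(j : ℝ)| ≤ bwS f (U.indicator (alphaHat I U R)) n z := by
  induction n using Nat.strong_induction_on with
  | _ n ih =>
    intro z hz hn
    rcases Nat.eq_zero_or_pos n with rfl | hpos
    · exact ⟨0, by simp, by simp [bwS]⟩
    · obtain ⟨hle, hτ⟩ := bw_ret_le hpos hn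
      obtain ⟨j, hj1, hj2⟩ := bw_alpha h hz' e hl hz
      obtain ⟨m, hm⟩ := Nat.exists_eq_add_of_le hle
      have hτU : f^[retTime f U z] z ∈ U := bw_ret_mem hz
      have hn' : f^[n] z = f^[m] (f^[retTime f U z] z) := by
        rw [← Function.iterate_add_apply, hm, add_comm]
      obtain ⟨i, hi1, hi2⟩ := ih m (by omega) _ hτU (by rw [← hn']; exact hn)
      refine ⟨i + j, ?_, ?_⟩
      · rw [hn']
        nth_rewrite 1 [hm]
        rw [add_comm, Function.iterate_add_apply, hj2, h.per1, hi1]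
        push_cast; ring
      · have h0 := bw_phi_nonneg I U R
        have e1 := bwS_add f (U.indicator (alphaHat I U R)) (retTime f U z) m z
        rw [← hm] at e1
        have e2 := bwS_mono (T := f) h0 (show 1 ≤ retTime f U z from hτ) z
        have e3 : bwS f (U.indicator (alphaHat I U R)) 1 z = alphaHat I U R z := by
          simp [bwS, Set.indicator_of_mem hz]
        have e4 := bw_le_hat hP hz hz' hR
        rw [hj1] at e4
        push_cast
        have := abs_add_le (i : ℝ) j
        linarith

theorem bw_rho_le {f : ℂ ≃ₜ ℂ} {I : HIsotopy f} {z' : ℂ}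
    (hz' : z' ∈ FixPts ⇑f) {U : Set ℂ} (hU : FreeDisc f U) {P : ℕ}
    (hP : ∀ z' ∈ FixPts ⇑f, ∀ z ∈ U, |alphaU I U z' z| ≤ P * retTime f U z) {R : ℝ}
    (hR : R ≤ ‖z'‖) {y : ℂ} (hy : y ∈ U) (k : ℕ) (hrec : f^[k] y ∈ RecPlus f) :
    ENNReal.ofReal |rho I z' (f^[k] y)| ≤ bwLim f (U.indicator (alphaHat I U R)) (f^[k] y) := by
  by_cases hrot : ∃ ρ : ℝ, HasRot I z' (f^[k] y) ρ
  swap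
  · rw [rho, dif_neg hrot]; simp
  have hrho : HasRot I z' (f^[k] y) (rho I z' (f^[k] y)) := by
    rw [rho, dif_pos hrot]; exact hrot.choose_spec
  generalize rho I z' (f^[k] y) = ρ at hrho
  obtain ⟨e⟩ := hU.2.1
  obtain ⟨F, hF⟩ := bw_exists_lift I z'
  obtain ⟨l, hl⟩ := bw_exists_logU e (bw_free_not_mem hU hz')
  obtain ⟨n, hn, hlim⟩ := hrec
  have hsum := hrho n hn hlim
  have hnt : Tendsto n atTop atTop := hn.tendsto_atTop
  -- the orbit of y also returns
  have hinvk : ∀ w, f.symm^[k] (f^[k] w) = w :=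
    Function.LeftInverse.iterate (fun w => f.symm_apply_apply w) k
  have hylim : Tendsto (fun i => f^[n i] y) atTop (𝓝 y) := by
    have h1 := ((f.symm.continuous.iterate k).tendsto (f^[k] y)).comp hlim
    rw [hinvk] at h1
    refine h1.congr fun i => ?_
    simp only [Function.comp]
    rw [← Function.iterate_add_apply, add_comm, Function.iterate_add_apply, hinvk]
  have hyU : ∀ᶠ i in atTop, f^[n i] y ∈ U := hylim.eventually (hU.1.mem_nhds hy)
  have hllim : Tendsto (fun i => (((F 1)^[k] (l (f^[n i] y))).im - ((F 1)^[k] (l y)).im)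
      / (2 * Real.pi)) atTop (𝓝 0) := by
    have h1 : ContinuousAt l y := hl.cont.continuousAt (hU.1.mem_nhds hy)
    have h2 := (((hF.cont1 1).iterate k).tendsto (l y)).comp (h1.tendsto.comp hylim)
    have h3 := (Complex.continuous_im.tendsto _).comp h2
    have h4 := (h3.sub_const ((F 1)^[k] (l y)).im).div_const (2 * Real.pi)
    simpa [Function.comp_def] using h4
  set φ := U.indicator (alphaHat I U R) with hφ
  have h0 : ∀ x, 0 ≤ φ x := bw_phi_nonneg I U R
  have hbd : ∀ᶠ i in atTop, |∑ r ∈ Finset.range (n i), Enlace I (f^[r] (f^[k] y)) z'|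
      ≤ bwS f φ (n i) (f^[k] y) + (bwS f φ k y + 1) := by
    filter_upwards [hyU, hllim.eventually (Metric.ball_mem_nhds 0 one_pos)] with i hi1 hi2
    obtain ⟨j, hj1, hj2⟩ := bw_return_sum hF hz' e hl hP hR (n i) y hy hi1
    have hb : |(((F 1)^[k] (l (f^[n i] y))).im - ((F 1)^[k] (l y)).im) / (2 * Real.pi)| < 1 := by
      rw [Real.dist_eq, sub_zero] at hi2
      exact hi2
    have hz : z' + Complex.exp ((F 1)^[k] (l y)) = f^[k] y := by
      rw [hF.exp_iter hz', hl.exp y hy, add_sub_cancel]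
    have hs := hF.sum_enlace hz' ((F 1)^[k] (l y)) (n i)
    rw [hz] at hs
    have hc : (F 1)^[n i] ((F 1)^[k] (l y)) = (F 1)^[k] (l (f^[n i] y)) + j * bwT := by
      rw [← Function.iterate_add_apply, add_comm, Function.iterate_add_apply, hj1, hF.per1]
    have hc2 := bw_im_T _ _ j hc
    have hs2 : ∑ r ∈ Finset.range (n i), Enlace I (f^[r] (f^[k] y)) z'
        = j + (((F 1)^[k] (l (f^[n i] y))).im - ((F 1)^[k] (l y)).im) / (2 * Real.pi) := by
      rw [hs, ← hc2]; ring
    rw [hs2]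
    have e1 := bwS_add f φ k (n i) y
    have e2 := bwS_mono (T := f) h0 (Nat.le_add_left (n i) k) y
    have := abs_add_le (j : ℝ) ((((F 1)^[k] (l (f^[n i] y))).im - ((F 1)^[k] (l y)).im) / (2 * Real.pi))
    linarith
  have key : ∀ c : ℝ, 0 ≤ c → c < |ρ| → ENNReal.ofReal c ≤ bwLim f φ (f^[k] y) := by
    intro c hc hcρ
    apply bwLim_ge
    obtain ⟨d, hd1, hd2⟩ := exists_between hcρ
    have h1 := hsum.abs.eventually (lt_mem_nhds hd2)
    have h2 : ∀ᶠ i in atTop, bwS f φ k y + 1 ≤ (n i : ℝ) * (d - c) :=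
      (((tendsto_natCast_atTop_atTop (R := ℝ)).comp hnt).atTop_mul_const
        (sub_pos.2 hd1)).eventually_ge_atTop _
    have h3 : ∀ᶠ i in atTop, (n i : ℝ) * c ≤ bwS f φ (n i) (f^[k] y) := by
      filter_upwards [h1, h2, hbd, hnt.eventually_ge_atTop 1] with i e1 e2 e3 e4
      have hpos : (0 : ℝ) < n i := by exact_mod_cast e4
      rw [abs_div, abs_of_pos hpos, lt_div_iff₀ hpos] at e1
      linarith
    exact hnt.frequently h3.frequently
  apply le_of_forall_lt
  intro a ha
  obtain ⟨b, hb1, hb2⟩ := ENNReal.lt_iff_exists_nnreal_btwn.1 ha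
  refine lt_of_lt_of_le hb1 ?_
  rw [← ENNReal.ofReal_coe_nnreal (p := b)] at hb2 ⊢
  exact key b b.2 ((ENNReal.ofReal_lt_ofReal_iff').1 hb2).1

theorem bw_ae_rec {f : ℂ ≃ₜ ℂ} (ν : Measure ℂ) [IsFiniteMeasure ν] (hf : MeasurePreserving f ν ν) :
    ∀ᵐ z ∂ν, z ∈ RecPlus f := by
  filter_upwards [hf.conservative.ae_frequently_mem_of_mem_nhds] with z hz
  have : MapClusterPt z atTop (fun n => f^[n] z) := by
    rw [mapClusterPt_iff_frequently]; exact hz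
  exact this.tendsto_subseq

theorem bw_final
    (f : ℂ ≃ₜ ℂ) (I : HIsotopy f) (hP1 : P1 I) (hA : Adapted I)
    (z' : ℕ → ℂ) (hz' : ∀ m, z' m ∈ FixPts ⇑f)
    (n₀ : ℕ) (R : ℝ) (hR : ∀ m, n₀ ≤ m → R ≤ ‖z' m‖)
    (ν : Measure ℂ) [IsFiniteMeasure ν] (hinv : Measure.map (⇑f) ν = ν)
    (U : Set ℂ) (hU : FreeDisc f U) :
    ∫ zz in ⋃ k : ℕ, (⇑f)^[k] '' U,
        sSup {a : ℝ | ∃ m : ℕ, n₀ ≤ m ∧ a = |rho I (z' m) zz|} ∂ν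
      ≤ ∫ zz in U, alphaHat I U R zz ∂ν := by
  have hf : MeasurePreserving f ν ν := ⟨f.continuous.measurable, hinv⟩
  obtain ⟨P, hP⟩ := bw_bound I hP1 hA hU
  have hg0 : ∀ z, 0 ≤ sSup {a : ℝ | ∃ m : ℕ, n₀ ≤ m ∧ a = |rho I (z' m) z|} := by
    intro z
    apply Real.sSup_nonneg
    rintro a ⟨m, -, rfl⟩
    exact abs_nonneg _
  have hRHS : 0 ≤ ∫ zz in U, alphaHat I U R zz ∂ν := integral_nonneg fun z => bw_hat_nonneg I U R z
  set V : Set ℂ := ⋃ k : ℕ, (⇑f)^[k] '' U with hV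
  have hVo : IsOpen V := by
    refine isOpen_iUnion fun k => ?_
    have : IsOpenMap (⇑f)^[k] := by
      induction k with
      | zero => exact IsOpenMap.id
      | succ k ih => rw [Function.iterate_succ]; exact ih.comp f.isOpenMap
    exact this U hU.1
  by_cases hint : Integrable
      (fun zz => sSup {a : ℝ | ∃ m : ℕ, n₀ ≤ m ∧ a = |rho I (z' m) zz|}) (ν.restrict V)
  swap
  · rw [integral_undef hint]; exact hRHS
  obtain ⟨hm, hl⟩ := bwLim_lintegral hf (bw_hat_measurable hU hP R) (bw_hat_integrable hU hP R ν hf)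
    (bw_phi_nonneg I U R)
  rw [integral_indicator hU.1.measurableSet] at hl
  rw [← ENNReal.ofReal_le_ofReal_iff hRHS,
    ofReal_integral_eq_lintegral_ofReal hint (ae_of_all _ hg0)]
  refine le_trans ?_ ((setLIntegral_le_lintegral V _).trans hl)
  apply lintegral_mono_ae
  rw [ae_restrict_iff' hVo.measurableSet]
  filter_upwards [bw_ae_rec ν hf] with z hz hzV
  obtain ⟨k, y, hy, rfl⟩ := mem_iUnion.1 hzV
  by_cases htop : bwLim f (U.indicator (alphaHat I U R)) (f^[k] y) = ⊤
  · rw [htop]; exact le_top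
  apply ENNReal.ofReal_le_of_le_toReal
  apply Real.sSup_le _ ENNReal.toReal_nonneg
  rintro a ⟨m, hm, rfl⟩
  have := bw_rho_le (hz' m) hU hP (hR m hm) hy k hz
  exact (ENNReal.ofReal_le_iff_le_toReal htop).1 this


theorem stmt16_integral_sup_rho_le_integral_alphaHat
    (f : ℂ ≃ₜ ℂ) (I : HIsotopy f) (hP1 : P1 I) (hP2 : P2 I)
    (hnc : ¬ IsCompact (FixPts ⇑f)) (hA : Adapted I)
    (z' : ℕ → ℂ) (hz' : ∀ m, z' m ∈ FixPts ⇑f)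
    (n₀ : ℕ) (R : ℝ) (hR : ∀ m, n₀ ≤ m → R ≤ ‖z' m‖)
    (ν : Measure ℂ) [IsFiniteMeasure ν] (hinv : Measure.map (⇑f) ν = ν)
    (U : Set ℂ) (hU : FreeDisc f U) :
    ∫ zz in ⋃ k : ℕ, (⇑f)^[k] '' U,
        sSup {a : ℝ | ∃ m : ℕ, n₀ ≤ m ∧ a = |rho I (z' m) zz|} ∂ν
      ≤ ∫ zz in U, alphaHat I U R zz ∂ν := by
  exact bw_final f I hP1 hA z' hz' n₀ R hR ν hinv U hU

end
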